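/- Let T be a c.e.m.p.t. on a σ-finite measure space (X,𝒜,μ) with μ(X)=∞, pointwise dual ergodic with return sequence a_n=a_T(n), a_T∈R_α for some α∈(0,1]; let b_T be the inverse of a_T and γ_T(s):=1/b_T(1/s). Suppose Y is a 𝒰-uniform set with 1_Y∈𝒰⊆𝒟(μ), and E_k⊆Y (k≥1) are measurable sets of positive measure with μ(E_k)→0. Assume there are integers z_k≥0 with z_k·μ(E_k)→0 and μ_{E_k}(φ_{E_k}≤z_k)→0 as k→∞, and that w_k:=T̂^{z_k}(1_{E_k}/μ(E_k)) admits a decomposition w_k=Σ_{ι≥0} π_{k,ι}·w_{k,ι} with densities w_{k,ι}∈𝒟(μ) satisfying 1_Y·T̂^j w_{k,ι}=0 a.e. for 1≤j<ι and T̂^ι w_{k,ι}∈𝒰, and weights π_{k,ι}≥0 summing to 1 such that for every δ>0, Σ_{ι>δ/γ_T(μ(E_k))} π_{k,ι} → 0 as k→∞. Then both μ_{E_k}(γ_T(μ(E_k))·φ_{E_k} ≤ t) and μ_Y(γ_T(μ(E_k))·φ_{E_k} ≤ t) converge, as k→∞, to the same limit F(t) at every t≥0, where F∈ℱ is the (unique)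 sub-distribution function satisfying F(t)=∫_0^t [1−F(s)]·α·(t−s)^{α−1} ds for all t≥0 (the distribution function H_α of 𝓔^{1/α}·𝒢_α). -/

import Mathlib

/-!
Write `N_k = b_T(1/μ(E_k))`, so that `μ(E_k) a_T(N_k) = 1` and `γ_T(μ(E_k)) = 1/N_k`, and let
`R_k(p) = μ_{E_k}(φ_{E_k} ≤ p N_k)` be the normalized return distribution.

*Hitting in terms of returning.* A visit to `E_k` during `[0, t N_k]` is split according to the time
`j` of the last such visit; after it there is no return for `t N_k - j` steps. The times `j` are
grouped into blocks whose endpoints `s_i N_k` are chosen with `s_i^α` equally spaced. By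
`𝒰`-uniformity, the expected number of visits in a block to a subset `D` of `Y` is about
`(a_T(s_{i+1} N_k) - a_T(s_i N_k)) μ(D)`, uniformly over initial densities in `𝒰`, and by regular
variation this is about `(s_{i+1}^α - s_i^α) a_T(N_k) μ(D)`. Hence the hitting probability from any
`u ∈ 𝒰` lies between Riemann sums of `∫₀ᵗ (1 - R_k(t-s)) d(s^α)`, up to `o(1)`
(`UnifVisits.hit_upper`, `UnifVisits.hit_lower`).

*Regeneration.* The law at time `z_k` of the process started from `μ_{E_k}` is a mixture of the
`w_{k,ι}`, which do not meet `Y` strictly before time `ι` (the time `0` aside) and whose law at time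
`ι` is in `𝒰`. As `z_k` and most `ι` are `o(N_k)` and returns before `z_k` are unlikely, `R_k(t)` is
bounded above by the hitting probabilities from `𝒰` up to `o(1)`, and `R_k(t+δ)` is bounded below
by them (`regen_upper`, `regen_lower`).

*Limit.* So `R_k` satisfies the Volterra equation approximately. The pointwise upper and lower
limits of `R_k` satisfy it as a pair of inequalities, and a Gronwall argument for the kernel
`α (t-s)^(α-1)` shows that they agree (`approx_solutions_converge`); the same argument gives
uniqueness (`volterra_unique`). Starting from `1_Y ∈ 𝒰`, the hitting bounds then give the same
limit for `μ_Y`.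
-/

open MeasureTheory Filter Set Topology ENNReal

noncomputable section

/-- First entrance/return time of `E` under `T`, valued in `ℝ≥0∞` (`∞` if the
forward orbit never enters `E`). -/
def phiRT {X : Type*} (T : X → X) (E : Set X) (x : X) : ℝ≥0∞ :=
  ⨅ n ∈ {n : ℕ | 0 < n ∧ T^[n] x ∈ E}, (n : ℝ≥0∞)

/-- Conditional (sub)probability `μ_E(A) = μ(E∩A)/μ(E)`, as a real number. -/
def condProb {X : Type*} [MeasurableSpace X] (μ : Measure X) (E A : Set X) : ℝ :=
  (μ (E ∩ A) / μ E).toReal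

/-- Conservative ergodic measure preserving transformation. -/
def CEMPT {X : Type*} [MeasurableSpace X] (T : X → X) (μ : Measure X) : Prop :=
  Conservative T μ ∧ Ergodic T μ

/-- Membership in the class ℱ of sub-probability distribution functions on `[0,∞)`. -/
def MemF (F : ℝ → ℝ) : Prop :=
  (∀ ⦃s t : ℝ⦄, 0 ≤ s → s ≤ t → F s ≤ F t) ∧
  (∀ t, 0 ≤ t → F t ∈ Set.Icc (0 : ℝ) 1) ∧
  (∀ t, 0 ≤ t → ContinuousWithinAt F (Set.Ici t) t)

/-- Vague convergence `Fₙ ⇒ F` of sub-distribution functions on `[0,∞)`: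
convergence at every continuity point of `F` in `[0,∞)`. -/
def VagueConv (Fn : ℕ → ℝ → ℝ) (F : ℝ → ℝ) : Prop :=
  ∀ t, 0 ≤ t → ContinuousWithinAt F (Set.Ici 0) t →
    Tendsto (fun n => Fn n t) atTop (𝓝 (F t))

/-- A scaling function: a homeomorphism of `[0,∞)`. -/
def IsScalingFunction (γ : ℝ → ℝ) : Prop :=
  γ 0 = 0 ∧ StrictMonoOn γ (Set.Ici 0) ∧ ContinuousOn γ (Set.Ici 0) ∧
  (∀ x, 0 ≤ x → 0 ≤ γ x) ∧ (∀ y, 0 ≤ y → ∃ x, 0 ≤ x ∧ γ x = y)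

/-- Regular variation of index `α` at infinity. -/
def RegVary (a : ℝ → ℝ) (α : ℝ) : Prop :=
  ∀ c : ℝ, 0 < c → Tendsto (fun t => a (c * t) / a t) atTop (𝓝 (c ^ α))

/-- The transfer operator iterate `T̂^k 1_Y` (unnormalized): the Radon–Nikodym
derivative w.r.t. `μ` of the pushforward under `T^k` of `μ` restricted to `Y`. -/
def dkDens {X : Type*} [MeasurableSpace X] (T : X → X) (μ : Measure X) (Y : Set X)
    (k : ℕ) : X → ℝ≥0∞ :=
  (Measure.map (T^[k]) (μ.restrict Y)).rnDeriv μ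

/-- `Y` is a Darling–Kac set with return sequence `n ↦ a n`:
`(1/aₙ) Σ_{k<n} T̂^k (1_Y/μ(Y)) → 1` uniformly (mod μ) on `Y`. -/
def IsDKSet {X : Type*} [MeasurableSpace X] (T : X → X) (μ : Measure X) (Y : Set X)
    (a : ℝ → ℝ) : Prop :=
  MeasurableSet Y ∧ 0 < μ Y ∧ μ Y < ∞ ∧
  ∀ ε : ℝ, 0 < ε → ∃ N : ℕ, ∀ n ≥ N,
    ∀ᵐ x ∂μ.restrict Y,
      |(∑ k ∈ Finset.range n, (dkDens T μ Y k x).toReal) / (μ Y).toReal / a n - 1| ≤ ε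

/-- Normalized return/hitting distribution function: the distribution, under `μ_A`,
of `γ(μ(E))·φ_E` evaluated at `t`. -/
def nrmDF {X : Type*} [MeasurableSpace X] (μ : Measure X) (T : X → X) (γ : ℝ → ℝ)
    (A E : Set X) (t : ℝ) : ℝ :=
  condProb μ A {x | ENNReal.ofReal (γ (μ E).toReal) * phiRT T E x ≤ ENNReal.ofReal t}

/-- The transfer operator iterate `T̂^j u` of a density `u`: the Radon–Nikodym derivative
w.r.t. `μ` of the pushforward under `T^j` of the measure `u·dμ`. -/
noncomputable def transferIter {X : Type*} [MeasurableSpace X] (T : X → X) (μ : Measure X)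
    (u : X → ℝ≥0∞) (j : ℕ) : X → ℝ≥0∞ :=
  (Measure.map (T^[j]) (μ.withDensity u)).rnDeriv μ

/-- Membership in `𝒟(μ)`: a measurable probability density. -/
def IsDensity {X : Type*} [MeasurableSpace X] (μ : Measure X) (u : X → ℝ≥0∞) : Prop :=
  Measurable u ∧ ∫⁻ x, u x ∂μ = 1

/-- Pointwise dual ergodicity with return sequence `n ↦ a n`. -/
def PointwiseDualErgodic {X : Type*} [MeasurableSpace X] (T : X → X) (μ : Measure X)
    (a : ℝ → ℝ) : Prop :=
  ∀ u : X → ℝ≥0∞, Measurable u → (∫⁻ x, u x ∂μ) ≠ 0 → (∫⁻ x, u x ∂μ) ≠ ∞ →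
    ∀ᵐ x ∂μ, Tendsto
      (fun n => (∑ k ∈ Finset.range n, transferIter T μ u k x).toReal / a n)
      atTop (𝓝 (∫⁻ x, u x ∂μ).toReal)

/-- `Y` is a `𝒰`-uniform set: `(1/aₙ)·Σ_{k<n} T̂^k u → 1` uniformly (mod μ) on `Y`,
uniformly in `u ∈ 𝒰`. -/
def IsUUniform {X : Type*} [MeasurableSpace X] (T : X → X) (μ : Measure X) (Y : Set X)
    (U : Set (X → ℝ≥0∞)) (a : ℝ → ℝ) : Prop :=
  MeasurableSet Y ∧ 0 < μ Y ∧ μ Y < ∞ ∧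
  ∀ ε : ℝ, 0 < ε → ∃ N : ℕ, ∀ n ≥ N, ∀ u ∈ U, ∀ᵐ x ∂μ.restrict Y,
    |(∑ k ∈ Finset.range n, transferIter T μ u k x).toReal / a n - 1| ≤ ε

/-! ### The fractional Volterra equation -/

/-- The fractional integral `∫₀ᵗ f(s) α (t-s)^(α-1) ds`. -/
def fracInt (α : ℝ) (f : ℝ → ℝ) (t : ℝ) : ℝ :=
  ∫ s in (0 : ℝ)..t, f s * (α * (t - s) ^ (α - 1))

lemma kernel_integrable {α : ℝ} (h0 : 0 < α) (t c d : ℝ) :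
    IntervalIntegrable (fun s => α * (t - s) ^ (α - 1)) volume c d := by
  have h := (intervalIntegral.intervalIntegrable_rpow' (a := t - c) (b := t - d)
    (r := α - 1) (by linarith)).const_mul α
  simpa using h.comp_sub_left t

lemma kernel_integral {α : ℝ} (h0 : 0 < α) (t c d : ℝ) :
    ∫ s in c..d, α * (t - s) ^ (α - 1) = (t - c) ^ α - (t - d) ^ α := by
  rw [intervalIntegral.integral_comp_sub_left (fun s => α * s ^ (α - 1)) t,
    intervalIntegral.integral_const_mul, integral_rpow (Or.inl (by linarith))]
  simp only [sub_add_cancel]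
  field_simp

lemma mul_kernel_integrable {α : ℝ} (h0 : 0 < α) {f : ℝ → ℝ} (hf : Measurable f)
    (h01 : ∀ s, f s ∈ Icc (0 : ℝ) 1) (t c d : ℝ) :
    IntervalIntegrable (fun s => f s * (α * (t - s) ^ (α - 1))) volume c d := by
  rw [intervalIntegrable_iff]
  have h := kernel_integrable h0 t c d
  rw [intervalIntegrable_iff] at h
  refine Integrable.bdd_mul (c := 1) h hf.aestronglyMeasurable (Eventually.of_forall fun s => ?_)
  rw [Real.norm_eq_abs, abs_le]
  constructor <;> linarith [(h01 s).1, (h01 s).2]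

lemma kernel_nonneg {α : ℝ} (h0 : 0 < α) {t s : ℝ} (h : s ≤ t) :
    0 ≤ α * (t - s) ^ (α - 1) :=
  mul_nonneg h0.le (Real.rpow_nonneg (by linarith) _)

/-- On a subinterval on which `f ≤ B`, the kernel integrates to a difference of powers. -/
lemma piece_le {α : ℝ} (h0 : 0 < α) {f : ℝ → ℝ} (hf : Measurable f)
    (h01 : ∀ s, f s ∈ Icc (0 : ℝ) 1) {t c d B : ℝ} (hcd : c ≤ d) (hdt : d ≤ t)
    (hB : ∀ s ∈ Icc c d, f s ≤ B) :
    ∫ s in c..d, f s * (α * (t - s) ^ (α - 1)) ≤ B * ((t - c) ^ α - (t - d) ^ α) := by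
  rw [← kernel_integral h0, ← intervalIntegral.integral_const_mul]
  refine intervalIntegral.integral_mono_on hcd (mul_kernel_integrable h0 hf h01 _ _ _)
    ((kernel_integrable h0 _ _ _).const_mul B) fun s hs => ?_
  exact mul_le_mul_of_nonneg_right (hB s hs) (kernel_nonneg h0 (hs.2.trans hdt))

lemma le_piece {α : ℝ} (h0 : 0 < α) {f : ℝ → ℝ} (hf : Measurable f)
    (h01 : ∀ s, f s ∈ Icc (0 : ℝ) 1) {t c d B : ℝ} (hcd : c ≤ d) (hdt : d ≤ t)
    (hB : ∀ s ∈ Icc c d, B ≤ f s) :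
    B * ((t - c) ^ α - (t - d) ^ α) ≤ ∫ s in c..d, f s * (α * (t - s) ^ (α - 1)) := by
  rw [← kernel_integral h0, ← intervalIntegral.integral_const_mul]
  refine intervalIntegral.integral_mono_on hcd ((kernel_integrable h0 _ _ _).const_mul B)
    (mul_kernel_integrable h0 hf h01 _ _ _) fun s hs => ?_
  exact mul_le_mul_of_nonneg_right (hB s hs) (kernel_nonneg h0 (hs.2.trans hdt))

/-- Fractional integrals of functions with values in `[0,1]` are `α`-Hölder; since the kernel is
decreasing, all error integrals can be computed exactly. -/
lemma fracInt_holder {α : ℝ} (hα : α ∈ Ioc (0 : ℝ) 1) {f : ℝ → ℝ} (hf : Measurable f)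
    (h01 : ∀ s, f s ∈ Icc (0 : ℝ) 1) {t t' : ℝ} (ht : 0 ≤ t) (htt : t ≤ t') :
    |fracInt α f t' - fracInt α f t| ≤ 2 * (t' - t) ^ α := by
  have h0 := hα.1
  have hsplit : fracInt α f t' = (∫ s in (0 : ℝ)..t, f s * (α * (t' - s) ^ (α - 1)))
      + ∫ s in t..t', f s * (α * (t' - s) ^ (α - 1)) :=
    (intervalIntegral.integral_add_adjacent_intervals
      (mul_kernel_integrable h0 hf h01 _ _ _) (mul_kernel_integrable h0 hf h01 _ _ _)).symm
  have h2 := piece_le h0 hf h01 (B := 1) htt le_rfl (fun s _ => (h01 s).2)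
  have h2' := le_piece h0 hf h01 (B := 0) htt le_rfl (fun s _ => (h01 s).1)
  rw [sub_self, Real.zero_rpow h0.ne', sub_zero] at h2 h2'
  have hae : ∀ᵐ s : ℝ, s ≠ t := by
    simp [ae_iff, measure_singleton]
  have hk : ∀ᵐ s, s ∈ Icc (0 : ℝ) t →
      α * (t' - s) ^ (α - 1) ≤ α * (t - s) ^ (α - 1) := by
    filter_upwards [hae] with s hs hsm
    have : 0 < t - s := sub_pos.2 (lt_of_le_of_ne hsm.2 hs)
    exact mul_le_mul_of_nonneg_left
      (Real.rpow_le_rpow_of_nonpos this (by linarith) (by linarith [hα.2])) h0.le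
  have hk' : ∀ᵐ s ∂volume.restrict (Icc (0 : ℝ) t),
      α * (t' - s) ^ (α - 1) ≤ α * (t - s) ^ (α - 1) :=
    (ae_restrict_iff' measurableSet_Icc).2 hk
  have hA : (∫ s in (0 : ℝ)..t, f s * (α * (t' - s) ^ (α - 1))) ≤ fracInt α f t := by
    refine intervalIntegral.integral_mono_ae_restrict ht
      (mul_kernel_integrable h0 hf h01 _ _ _) (mul_kernel_integrable h0 hf h01 _ _ _) ?_
    filter_upwards [hk'] with s hs
    exact mul_le_mul_of_nonneg_left hs (h01 s).1
  have hB : fracInt α f t - (∫ s in (0 : ℝ)..t, f s * (α * (t' - s) ^ (α - 1)))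
      ≤ (∫ s in (0 : ℝ)..t, α * (t - s) ^ (α - 1)) - ∫ s in (0 : ℝ)..t, α * (t' - s) ^ (α - 1) := by
    rw [fracInt, ← intervalIntegral.integral_sub (mul_kernel_integrable h0 hf h01 _ _ _)
      (mul_kernel_integrable h0 hf h01 _ _ _), ← intervalIntegral.integral_sub
      (kernel_integrable h0 _ _ _) (kernel_integrable h0 _ _ _)]
    refine intervalIntegral.integral_mono_ae_restrict ht
      ((mul_kernel_integrable h0 hf h01 _ _ _).sub (mul_kernel_integrable h0 hf h01 _ _ _))
      ((kernel_integrable h0 _ _ _).sub (kernel_integrable h0 _ _ _)) ?_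
    filter_upwards [hk'] with s hs
    nlinarith [(h01 s).1, (h01 s).2]
  rw [kernel_integral h0, kernel_integral h0, sub_self, Real.zero_rpow h0.ne', sub_zero,
    sub_zero, sub_zero] at hB
  have hpow : t ^ α ≤ t' ^ α := Real.rpow_le_rpow ht htt h0.le
  have hnn : 0 ≤ (t' - t) ^ α := Real.rpow_nonneg (by linarith) _
  rw [abs_le]
  constructor <;> linarith

lemma fracInt_nonneg {α : ℝ} (h0 : 0 < α) {f : ℝ → ℝ}
    (h01 : ∀ s, f s ∈ Icc (0 : ℝ) 1) {t : ℝ} (ht : 0 ≤ t) : 0 ≤ fracInt α f t :=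
  intervalIntegral.integral_nonneg ht fun s hs =>
    mul_nonneg (h01 s).1 (kernel_nonneg h0 hs.2)

/-- A Gronwall inequality for the kernel `α (t-s)^(α-1)`: the kernel has mass `1/2` on intervals
of length `h = (1/2)^(1/α)`, so `D` vanishes successively on `[0,h]`, `[h,2h]`, and so on. -/
lemma gronwall_zero {α : ℝ} (h0 : 0 < α) {D : ℝ → ℝ} (hD : Measurable D)
    (h01 : ∀ s, D s ∈ Icc (0 : ℝ) 1) (hle : ∀ t, 0 ≤ t → D t ≤ fracInt α D t) :
    ∀ t, 0 ≤ t → D t = 0 := by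
  set h : ℝ := (1 / 2 : ℝ) ^ (1 / α) with hh
  have hpos : 0 < h := Real.rpow_pos_of_pos (by norm_num) _
  have hpow : h ^ α = 1 / 2 := by
    rw [hh, ← Real.rpow_mul (by norm_num), one_div_mul_cancel h0.ne', Real.rpow_one]
  have key : ∀ n : ℕ, ∀ t, 0 ≤ t → t ≤ n * h → D t = 0 := by
    intro n
    induction n with
    | zero =>
      intro t ht ht'
      have : t = 0 := le_antisymm (by simpa using ht') ht
      subst this
      have := hle 0 le_rfl
      simp only [fracInt, intervalIntegral.integral_same] at this
      exact le_antisymm this (h01 0).1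
    | succ n ih =>
      have hb : ∀ j : ℕ, ∀ t, 0 ≤ t → t ≤ (n + 1 : ℕ) * h → D t ≤ (1 / 2 : ℝ) ^ j := by
        intro j
        induction j with
        | zero => intro t _ _; simpa using (h01 t).2
        | succ j ihj =>
          intro t ht ht'
          rcases le_total t (n * h) with hc | hc
          · rw [ih t ht hc]; positivity
          have hnh : 0 ≤ n * h := by positivity
          have e1 : fracInt α D t = (∫ s in (0 : ℝ)..(n * h), D s * (α * (t - s) ^ (α - 1)))
              + ∫ s in (n * h)..t, D s * (α * (t - s) ^ (α - 1)) :=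
            (intervalIntegral.integral_add_adjacent_intervals
              (mul_kernel_integrable h0 hD h01 _ _ _) (mul_kernel_integrable h0 hD h01 _ _ _)).symm
          have e2 := piece_le h0 hD h01 (t := t) (B := 0) hnh hc
            (fun s hs => (ih s hs.1 hs.2).le)
          have e3 := piece_le h0 hD h01 (t := t) (B := (1 / 2 : ℝ) ^ j) hc le_rfl
            (fun s hs => ihj s (hnh.trans hs.1) (hs.2.trans ht'))
          rw [sub_self, Real.zero_rpow h0.ne', sub_zero] at e3
          have e4 : (t - n * h) ^ α ≤ 1 / 2 := by
            rw [← hpow]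
            refine Real.rpow_le_rpow (by linarith) ?_ h0.le
            push_cast at ht'
            linarith
          have e5 : (1 / 2 : ℝ) ^ j * (t - n * h) ^ α ≤ (1 / 2 : ℝ) ^ j * (1 / 2) :=
            mul_le_mul_of_nonneg_left e4 (by positivity)
          have := hle t ht
          rw [pow_succ]
          linarith
      intro t ht ht'
      refine le_antisymm ?_ (h01 t).1
      exact ge_of_tendsto' (tendsto_pow_atTop_nhds_zero_of_lt_one (by norm_num) (by norm_num))
        (fun j => hb j t ht ht')
  intro t ht
  obtain ⟨n, hn⟩ := exists_nat_ge (t / h)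
  exact key n t ht ((div_le_iff₀ hpos).1 hn)

/-- The partition `s_i = t (i/M)^(1/α)` of `[0,t]`, on which `s ↦ s^α` has constant increments. -/
def stepPt (α t : ℝ) (M i : ℕ) : ℝ := t * ((i : ℝ) / M) ^ (1 / α)

lemma stepPt_zero {α : ℝ} (h0 : 0 < α) (t : ℝ) (M : ℕ) : stepPt α t M 0 = 0 := by
  simp [stepPt, Real.zero_rpow (inv_ne_zero h0.ne')]

lemma stepPt_self (α t : ℝ) {M : ℕ} (hM : 0 < M) : stepPt α t M M = t := by
  have : (M : ℝ) ≠ 0 := by positivity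
  simp [stepPt, div_self this]

lemma stepPt_mono {α t : ℝ} (h0 : 0 < α) (ht : 0 ≤ t) (M : ℕ) {i j : ℕ} (h : i ≤ j) :
    stepPt α t M i ≤ stepPt α t M j := by
  unfold stepPt
  gcongr

lemma stepPt_nonneg {α t : ℝ} (ht : 0 ≤ t) (M i : ℕ) : 0 ≤ stepPt α t M i := by
  unfold stepPt
  positivity

lemma stepPt_le {α t : ℝ} (h0 : 0 < α) (ht : 0 ≤ t) {M i : ℕ} (hM : 0 < M) (h : i ≤ M) :
    stepPt α t M i ≤ t := (stepPt_mono h0 ht M h).trans (stepPt_self α t hM).le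

lemma stepPt_rpow {α t : ℝ} (h0 : 0 < α) (ht : 0 ≤ t) (M i : ℕ) :
    stepPt α t M i ^ α = t ^ α * (i / M) := by
  unfold stepPt
  rw [Real.mul_rpow ht (by positivity), ← Real.rpow_mul (by positivity),
    one_div_mul_cancel h0.ne', Real.rpow_one]

lemma stepPt_diff {α t : ℝ} (h0 : 0 < α) (ht : 0 ≤ t) (M i : ℕ) :
    stepPt α t M (i + 1) ^ α - stepPt α t M i ^ α = t ^ α / M := by
  rw [stepPt_rpow h0 ht, stepPt_rpow h0 ht]
  push_cast
  ring

lemma fracInt_eq_sum {α t : ℝ} (h0 : 0 < α) {M : ℕ} (hM : 0 < M) {f : ℝ → ℝ}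
    (hf : Measurable f) (h01 : ∀ s, f s ∈ Icc (0 : ℝ) 1) :
    fracInt α f t = ∑ i ∈ Finset.range M,
      ∫ s in (t - stepPt α t M (i + 1))..(t - stepPt α t M i), f s * (α * (t - s) ^ (α - 1)) := by
  have h := intervalIntegral.sum_integral_adjacent_intervals (μ := volume) (n := M)
    (f := fun s => f s * (α * (t - s) ^ (α - 1))) (a := fun i => t - stepPt α t M i)
    (fun i _ => mul_kernel_integrable h0 hf h01 _ _ _)
  simp only [stepPt_zero h0, stepPt_self α t hM, sub_zero, sub_self] at h
  rw [fracInt, intervalIntegral.integral_symm, ← h, ← Finset.sum_neg_distrib]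
  refine Finset.sum_congr rfl fun i _ => ?_
  rw [intervalIntegral.integral_symm (t - stepPt α t M (i + 1)), neg_neg]

/-- For decreasing `f`, the upper and lower sums differ by at most `t^α / M`, as the difference
telescopes. -/
lemma upper_sum_le {α t : ℝ} (h0 : 0 < α) (ht : 0 ≤ t) {M : ℕ} (hM : 0 < M) {f : ℝ → ℝ}
    (hf : Antitone f) (h01 : ∀ s, f s ∈ Icc (0 : ℝ) 1) :
    ∑ i ∈ Finset.range M, f (t - stepPt α t M (i + 1)) * (t ^ α / M)
      ≤ fracInt α f t + t ^ α / M := by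
  have h1 : ∑ i ∈ Finset.range M, f (t - stepPt α t M i) * (t ^ α / M) ≤ fracInt α f t := by
    rw [fracInt_eq_sum h0 hM hf.measurable h01]
    refine Finset.sum_le_sum fun i _ => ?_
    have := le_piece h0 hf.measurable h01 (t := t) (B := f (t - stepPt α t M i))
      (sub_le_sub_left (stepPt_mono h0 ht M (Nat.le_succ i)) t)
      (sub_le_self t (stepPt_nonneg ht M i)) (fun s hs => hf hs.2)
    simpa only [_root_.sub_sub_cancel, Nat.succ_eq_add_one, stepPt_diff h0 ht] using this
  have h2 := Finset.sum_range_sub (fun i => f (t - stepPt α t M i)) M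
  simp only [stepPt_zero h0, stepPt_self α t hM, sub_zero, sub_self] at h2
  have h3 : 0 ≤ t ^ α / M := by positivity
  have h4 : ∑ i ∈ Finset.range M, f (t - stepPt α t M (i + 1)) * (t ^ α / M)
      - ∑ i ∈ Finset.range M, f (t - stepPt α t M i) * (t ^ α / M)
      = (f 0 - f t) * (t ^ α / M) := by
    rw [← Finset.sum_mul, ← Finset.sum_mul, ← sub_mul, ← Finset.sum_sub_distrib, h2]
  have h5 : (f 0 - f t) * (t ^ α / M) ≤ 1 * (t ^ α / M) :=
    mul_le_mul_of_nonneg_right (by linarith [(h01 0).2, (h01 t).1]) h3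
  linarith

lemma le_lower_sum {α t : ℝ} (h0 : 0 < α) (ht : 0 ≤ t) {M : ℕ} (hM : 0 < M) {f : ℝ → ℝ}
    (hf : Antitone f) (h01 : ∀ s, f s ∈ Icc (0 : ℝ) 1) :
    fracInt α f t - t ^ α / M ≤
      ∑ i ∈ Finset.range M, f (t - stepPt α t M i) * (t ^ α / M) := by
  have h1 : fracInt α f t ≤
      ∑ i ∈ Finset.range M, f (t - stepPt α t M (i + 1)) * (t ^ α / M) := by
    rw [fracInt_eq_sum h0 hM hf.measurable h01]
    refine Finset.sum_le_sum fun i _ => ?_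
    have := piece_le h0 hf.measurable h01 (t := t) (B := f (t - stepPt α t M (i + 1)))
      (sub_le_sub_left (stepPt_mono h0 ht M (Nat.le_succ i)) t)
      (sub_le_self t (stepPt_nonneg ht M i)) (fun s hs => hf hs.1)
    simpa only [_root_.sub_sub_cancel, Nat.succ_eq_add_one, stepPt_diff h0 ht] using this
  have h2 := Finset.sum_range_sub (fun i => f (t - stepPt α t M i)) M
  simp only [stepPt_zero h0, stepPt_self α t hM, sub_zero, sub_self] at h2
  have h3 : 0 ≤ t ^ α / M := by positivity
  have h4 : ∑ i ∈ Finset.range M, f (t - stepPt α t M (i + 1)) * (t ^ α / M)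
      - ∑ i ∈ Finset.range M, f (t - stepPt α t M i) * (t ^ α / M)
      = (f 0 - f t) * (t ^ α / M) := by
    rw [← Finset.sum_mul, ← Finset.sum_mul, ← sub_mul, ← Finset.sum_sub_distrib, h2]
  have h5 : (f 0 - f t) * (t ^ α / M) ≤ 1 * (t ^ α / M) :=
    mul_le_mul_of_nonneg_right (by linarith [(h01 0).2, (h01 t).1]) h3
  linarith

/-! ### Approximate solutions of the Volterra equation converge -/

/-- Upper Riemann sums along `R k` are asymptotically bounded by the fractional integral of
`1 - L`, if `L` is an asymptotic lower bound for `R k`. -/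
lemma eventually_le_fracInt {α : ℝ} (h0 : 0 < α) {R : ℕ → ℝ → ℝ} {q : ℕ → ℝ} {L : ℝ → ℝ}
    {t : ℝ} (ht : 0 ≤ t) (hL : Monotone L) (hL01 : ∀ s, L s ∈ Icc (0 : ℝ) 1)
    (hLR : ∀ p, 0 ≤ p → ∀ θ > 0, ∀ᶠ k in atTop, L p - θ ≤ R k p)
    (hq : ∀ M : ℕ, 0 < M → ∀ θ > 0, ∀ᶠ k in atTop,
      q k ≤ ∑ i ∈ Finset.range M, (1 - R k (t - stepPt α t M (i + 1))) * (t ^ α / M) + θ) :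
    ∀ θ > 0, ∀ᶠ k in atTop, q k ≤ fracInt α (fun s => 1 - L s) t + θ := by
  intro θ hθ
  obtain ⟨M, hM⟩ := exists_nat_gt (t ^ α / (θ / 3))
  have hta : 0 ≤ t ^ α := Real.rpow_nonneg ht _
  have hMr : (0 : ℝ) < M := lt_of_le_of_lt (by positivity) hM
  have hM0 : 0 < M := by exact_mod_cast hMr
  have hM1 : t ^ α / M ≤ θ / 3 := by
    rw [div_lt_iff₀ (by positivity)] at hM
    rw [div_le_iff₀ hMr]
    linarith
  set η : ℝ := θ / 3 / (t ^ α + 1) with hη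
  have hηpos : 0 < η := by positivity
  have hηt : η * t ^ α ≤ θ / 3 := by
    rw [hη, div_mul_eq_mul_div, div_le_iff₀ (by positivity)]
    nlinarith
  have hall : ∀ᶠ k in atTop, ∀ i ∈ Finset.range M,
      L (t - stepPt α t M (i + 1)) - η ≤ R k (t - stepPt α t M (i + 1)) :=
    (Filter.eventually_all_finset _).2 fun i hi => hLR _ (sub_nonneg.2 (stepPt_le h0 ht hM0 (Finset.mem_range.1 hi))) η hηpos
  filter_upwards [hall, hq M hM0 (θ / 3) (by positivity)] with k hk hk2
  have h1 : ∑ i ∈ Finset.range M, (1 - R k (t - stepPt α t M (i + 1))) * (t ^ α / M)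
      ≤ ∑ i ∈ Finset.range M,
        ((1 - L (t - stepPt α t M (i + 1))) * (t ^ α / M) + η * (t ^ α / M)) := by
    refine Finset.sum_le_sum fun i hi => ?_
    rw [← add_mul]
    exact mul_le_mul_of_nonneg_right (by linarith [hk i hi]) (by positivity)
  have h2 : ∑ i ∈ Finset.range M, η * (t ^ α / M) = η * t ^ α := by
    rw [Finset.sum_const, Finset.card_range, nsmul_eq_mul]
    field_simp
  rw [Finset.sum_add_distrib, h2] at h1
  have h3 := upper_sum_le h0 ht hM0 (f := fun s => 1 - L s)
    (fun x y h => sub_le_sub_left (hL h) 1)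
    (fun s => ⟨by linarith [(hL01 s).2], by linarith [(hL01 s).1]⟩)
  linarith

lemma eventually_fracInt_le {α : ℝ} (h0 : 0 < α) {R : ℕ → ℝ → ℝ} {q : ℕ → ℝ} {L : ℝ → ℝ}
    {t : ℝ} (ht : 0 ≤ t) (hL : Monotone L) (hL01 : ∀ s, L s ∈ Icc (0 : ℝ) 1)
    (hLR : ∀ p, 0 ≤ p → ∀ θ > 0, ∀ᶠ k in atTop, R k p ≤ L p + θ)
    (hq : ∀ M : ℕ, 0 < M → ∀ θ > 0, ∀ᶠ k in atTop,
      ∑ i ∈ Finset.range M, (1 - R k (t - stepPt α t M i)) * (t ^ α / M) - θ ≤ q k) :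
    ∀ θ > 0, ∀ᶠ k in atTop, fracInt α (fun s => 1 - L s) t - θ ≤ q k := by
  intro θ hθ
  obtain ⟨M, hM⟩ := exists_nat_gt (t ^ α / (θ / 3))
  have hta : 0 ≤ t ^ α := Real.rpow_nonneg ht _
  have hMr : (0 : ℝ) < M := lt_of_le_of_lt (by positivity) hM
  have hM0 : 0 < M := by exact_mod_cast hMr
  have hM1 : t ^ α / M ≤ θ / 3 := by
    rw [div_lt_iff₀ (by positivity)] at hM
    rw [div_le_iff₀ hMr]
    linarith
  set η : ℝ := θ / 3 / (t ^ α + 1) with hη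
  have hηpos : 0 < η := by positivity
  have hηt : η * t ^ α ≤ θ / 3 := by
    rw [hη, div_mul_eq_mul_div, div_le_iff₀ (by positivity)]
    nlinarith
  have hall : ∀ᶠ k in atTop, ∀ i ∈ Finset.range M,
      R k (t - stepPt α t M i) ≤ L (t - stepPt α t M i) + η :=
    (Filter.eventually_all_finset _).2 fun i hi => hLR _ (sub_nonneg.2 (stepPt_le h0 ht hM0 (Finset.mem_range.1 hi).le)) η hηpos
  filter_upwards [hall, hq M hM0 (θ / 3) (by positivity)] with k hk hk2
  have h1 : ∑ i ∈ Finset.range M,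
        ((1 - L (t - stepPt α t M i)) * (t ^ α / M) - η * (t ^ α / M))
      ≤ ∑ i ∈ Finset.range M, (1 - R k (t - stepPt α t M i)) * (t ^ α / M) := by
    refine Finset.sum_le_sum fun i hi => ?_
    rw [← sub_mul]
    exact mul_le_mul_of_nonneg_right (by linarith [hk i hi]) (by positivity)
  have h2 : ∑ i ∈ Finset.range M, η * (t ^ α / M) = η * t ^ α := by
    rw [Finset.sum_const, Finset.card_range, nsmul_eq_mul]
    field_simp
  rw [Finset.sum_sub_distrib, h2] at h1
  have h3 := le_lower_sum h0 ht hM0 (f := fun s => 1 - L s)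
    (fun x y h => sub_le_sub_left (hL h) 1)
    (fun s => ⟨by linarith [(hL01 s).2], by linarith [(hL01 s).1]⟩)
  linarith

/-- A sequence of monotone functions satisfying the Volterra equation approximately converges
to a solution: the upper and lower limits `P`, `Q` satisfy `P ≤ K(1-Q)` and `Q ≥ K(1-P)`, so
`P - Q ≤ K(P-Q)` and `gronwall_zero` applies. -/
lemma approx_solutions_converge {α : ℝ} (hα : α ∈ Ioc (0 : ℝ) 1) {R : ℕ → ℝ → ℝ}
    (hmono : ∀ k, Monotone (R k)) (h01 : ∀ k t, R k t ∈ Icc (0 : ℝ) 1)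
    (hup : ∀ t, 0 ≤ t → ∀ M : ℕ, 0 < M → ∀ θ > 0, ∀ᶠ k in atTop,
      R k t ≤ ∑ i ∈ Finset.range M, (1 - R k (t - stepPt α t M (i + 1))) * (t ^ α / M) + θ)
    (hlow : ∀ t δ, 0 ≤ t → 0 < δ → ∀ M : ℕ, 0 < M → ∀ θ > 0, ∀ᶠ k in atTop,
      ∑ i ∈ Finset.range M, (1 - R k (t - stepPt α t M i)) * (t ^ α / M) - θ ≤ R k (t + δ)) :
    ∃ F : ℝ → ℝ, Monotone F ∧ (∀ t, F t ∈ Icc (0 : ℝ) 1) ∧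
      (∀ t, 0 ≤ t → F t = fracInt α (fun s => 1 - F s) t) ∧
      ∀ t, 0 ≤ t → Tendsto (fun k => R k t) atTop (𝓝 (F t)) := by
  have h0 := hα.1
  have bda : ∀ t, IsBoundedUnder (· ≤ ·) atTop fun k => R k t := fun t =>
    isBoundedUnder_of ⟨1, fun k => (h01 k t).2⟩
  have bdb : ∀ t, IsBoundedUnder (· ≥ ·) atTop fun k => R k t := fun t =>
    isBoundedUnder_of ⟨0, fun k => (h01 k t).1⟩
  set P : ℝ → ℝ := fun t => limsup (fun k => R k t) atTop with hP
  set Q : ℝ → ℝ := fun t => liminf (fun k => R k t) atTop with hQ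
  have hQP : ∀ t, Q t ≤ P t := fun t => liminf_le_limsup (bda t) (bdb t)
  have hP1 : ∀ t, P t ≤ 1 := fun t =>
    limsup_le_of_le (bdb t).isCoboundedUnder_le (Eventually.of_forall fun k => (h01 k t).2)
  have hQ0 : ∀ t, 0 ≤ Q t := fun t =>
    le_liminf_of_le (bda t).isCoboundedUnder_ge (Eventually.of_forall fun k => (h01 k t).1)
  have hP01 : ∀ t, P t ∈ Icc (0 : ℝ) 1 := fun t => ⟨(hQ0 t).trans (hQP t), hP1 t⟩
  have hQ01 : ∀ t, Q t ∈ Icc (0 : ℝ) 1 := fun t => ⟨hQ0 t, (hQP t).trans (hP1 t)⟩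
  have hPm : Monotone P := fun s t hst =>
    limsup_le_limsup (Eventually.of_forall fun k => hmono k hst)
      (bdb s).isCoboundedUnder_le (bda t)
  have hQm : Monotone Q := fun s t hst =>
    liminf_le_liminf (Eventually.of_forall fun k => hmono k hst)
      (bdb s) (bda t).isCoboundedUnder_ge
  have hPR : ∀ p, 0 ≤ p → ∀ θ > 0, ∀ᶠ k in atTop, R k p ≤ P p + θ := fun p _ θ hθ =>
    (eventually_lt_of_limsup_lt (show P p < P p + θ by linarith) (bda p)).mono fun _ h => h.le
  have hQR : ∀ p, 0 ≤ p → ∀ θ > 0, ∀ᶠ k in atTop, Q p - θ ≤ R k p := fun p _ θ hθ =>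
    (eventually_lt_of_lt_liminf (show Q p - θ < Q p by linarith) (bdb p)).mono fun _ h => h.le
  have cP01 : ∀ t, 1 - P t ∈ Icc (0 : ℝ) 1 := fun t =>
    ⟨by linarith [(hP01 t).2], by linarith [(hP01 t).1]⟩
  have cQ01 : ∀ t, 1 - Q t ∈ Icc (0 : ℝ) 1 := fun t =>
    ⟨by linarith [(hQ01 t).2], by linarith [(hQ01 t).1]⟩
  have mP : Measurable fun s => 1 - P s := measurable_const.sub hPm.measurable
  have mQ : Measurable fun s => 1 - Q s := measurable_const.sub hQm.measurable
  have hPle : ∀ t, 0 ≤ t → P t ≤ fracInt α (fun s => 1 - Q s) t := by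
    intro t ht
    refine le_of_forall_pos_le_add fun θ hθ => ?_
    exact limsup_le_of_le (bdb t).isCoboundedUnder_le
      (eventually_le_fracInt h0 ht hQm hQ01 hQR (hup t ht) θ hθ)
  have hQge' : ∀ t δ, 0 ≤ t → 0 < δ → fracInt α (fun s => 1 - P s) t ≤ Q (t + δ) := by
    intro t δ ht hδ
    refine le_of_forall_pos_le_add fun θ hθ => ?_
    have := le_liminf_of_le (bda (t + δ)).isCoboundedUnder_ge
      (eventually_fracInt_le h0 ht hPm hP01 hPR (hlow t δ ht hδ) θ hθ)
    change fracInt α (fun s => 1 - P s) t - θ ≤ Q (t + δ) at this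
    linarith
  have hQge : ∀ t, 0 ≤ t → fracInt α (fun s => 1 - P s) t ≤ Q t := by
    intro t ht
    rcases ht.eq_or_lt with rfl | ht'
    · simpa [fracInt] using hQ0 0
    have hlim : Tendsto (fun δ : ℝ => Q t + 2 * δ ^ α) (𝓝[>] 0) (𝓝 (Q t + 2 * 0 ^ α)) := by
      have : ContinuousAt (fun δ : ℝ => Q t + 2 * δ ^ α) 0 :=
        continuousAt_const.add (continuousAt_const.mul
          (Real.continuousAt_rpow_const 0 α (Or.inr h0.le)))
      exact this.tendsto.mono_left nhdsWithin_le_nhds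
    rw [Real.zero_rpow h0.ne', mul_zero, add_zero] at hlim
    refine ge_of_tendsto hlim ?_
    filter_upwards [Ioo_mem_nhdsGT ht'] with δ hδ
    have e1 := hQge' (t - δ) δ (by linarith [hδ.2]) hδ.1
    have e2 := abs_le.1 (fracInt_holder hα mP cP01 (t := t - δ) (t' := t)
      (by linarith [hδ.2]) (by linarith [hδ.1]))
    rw [sub_add_cancel] at e1
    rw [_root_.sub_sub_cancel] at e2
    linarith [e2.2]
  have hPQ : ∀ t, 0 ≤ t → P t - Q t = 0 := by
    refine gronwall_zero h0 (D := fun t => P t - Q t) (hPm.measurable.sub hQm.measurable)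
      (fun t => ⟨by linarith [hQP t], by linarith [hP1 t, hQ0 t]⟩) fun t ht => ?_
    have e : fracInt α (fun t => P t - Q t) t
        = fracInt α (fun s => 1 - Q s) t - fracInt α (fun s => 1 - P s) t := by
      rw [fracInt, fracInt, fracInt, ← intervalIntegral.integral_sub
        (mul_kernel_integrable h0 mQ cQ01 _ _ _) (mul_kernel_integrable h0 mP cP01 _ _ _)]
      congr 1
      ext s
      ring
    rw [e]
    linarith [hPle t ht, hQge t ht]
  have hfr : ∀ t, 0 ≤ t → fracInt α (fun s => 1 - Q s) t = fracInt α (fun s => 1 - P s) t := by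
    intro t ht
    refine intervalIntegral.integral_congr fun s hs => ?_
    rw [uIcc_of_le ht] at hs
    have := hPQ s hs.1
    simp only [show Q s = P s by linarith]
  refine ⟨P, hPm, hP01, fun t ht => ?_, fun t ht => ?_⟩
  · refine le_antisymm ((hPle t ht).trans_eq (hfr t ht)) ?_
    linarith [hQge t ht, hQP t]
  · exact tendsto_of_liminf_eq_limsup (by have := hPQ t ht; simp only [hP, hQ] at this; linarith)
      rfl (bda t) (bdb t)

/-- Solutions of the Volterra equation in `ℱ` are unique. -/
lemma volterra_unique {α : ℝ} (h0 : 0 < α) {F G : ℝ → ℝ}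
    (hFm : MonotoneOn F (Ici 0)) (hF01 : ∀ t, 0 ≤ t → F t ∈ Icc (0 : ℝ) 1)
    (hGm : MonotoneOn G (Ici 0)) (hG01 : ∀ t, 0 ≤ t → G t ∈ Icc (0 : ℝ) 1)
    (hF : ∀ t, 0 ≤ t → F t = fracInt α (fun s => 1 - F s) t)
    (hG : ∀ t, 0 ≤ t → G t = fracInt α (fun s => 1 - G s) t) :
    ∀ t, 0 ≤ t → G t = F t := by
  -- Only the values on `[0,∞)` matter, so both functions are extended by constants.
  have main : ∀ H : ℝ → ℝ, MonotoneOn H (Ici 0) → (∀ t, 0 ≤ t → H t ∈ Icc (0 : ℝ) 1) →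
      (∀ t, 0 ≤ t → H t = fracInt α (fun s => 1 - H s) t) →
      Monotone (fun s => H (max 0 s)) ∧
      ∀ t, 0 ≤ t → H (max 0 t) = fracInt α (fun s => 1 - H (max 0 s)) t := by
    intro H hm h01 he
    refine ⟨fun x y hxy => hm (mem_Ici.2 (le_max_left _ _)) (mem_Ici.2 (le_max_left _ _)) (max_le_max le_rfl hxy),
      fun t ht => ?_⟩
    rw [max_eq_right ht, he t ht]
    refine intervalIntegral.integral_congr fun s hs => ?_
    rw [uIcc_of_le ht] at hs
    simp only [max_eq_right hs.1]
  obtain ⟨mF, eF⟩ := main F hFm hF01 hF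
  obtain ⟨mG, eG⟩ := main G hGm hG01 hG
  have f01 : ∀ s, F (max 0 s) ∈ Icc (0 : ℝ) 1 := fun s => hF01 _ (le_max_left _ _)
  have g01 : ∀ s, G (max 0 s) ∈ Icc (0 : ℝ) 1 := fun s => hG01 _ (le_max_left _ _)
  have cf : ∀ s, 1 - F (max 0 s) ∈ Icc (0 : ℝ) 1 := fun s =>
    ⟨by linarith [(f01 s).2], by linarith [(f01 s).1]⟩
  have cg : ∀ s, 1 - G (max 0 s) ∈ Icc (0 : ℝ) 1 := fun s =>
    ⟨by linarith [(g01 s).2], by linarith [(g01 s).1]⟩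
  have nf : Measurable fun s => 1 - F (max 0 s) := measurable_const.sub mF.measurable
  have ng : Measurable fun s => 1 - G (max 0 s) := measurable_const.sub mG.measurable
  have hmeas : Measurable fun t => |G (max 0 t) - F (max 0 t)| :=
    (mG.measurable.sub mF.measurable).norm
  have habs : ∀ s, |G (max 0 s) - F (max 0 s)| ∈ Icc (0 : ℝ) 1 := fun s =>
    ⟨abs_nonneg _, abs_le.2 ⟨by linarith [(f01 s).2, (g01 s).1], by
      linarith [(g01 s).2, (f01 s).1]⟩⟩
  have key := gronwall_zero h0 hmeas habs fun t ht => by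
    have hd : G (max 0 t) - F (max 0 t) = ∫ s in (0 : ℝ)..t,
        ((1 - G (max 0 s)) * (α * (t - s) ^ (α - 1))
          - (1 - F (max 0 s)) * (α * (t - s) ^ (α - 1))) := by
      rw [eG t ht, eF t ht]
      exact (intervalIntegral.integral_sub (mul_kernel_integrable h0 ng cg _ _ _)
        (mul_kernel_integrable h0 nf cf _ _ _)).symm
    rw [hd]
    refine (intervalIntegral.abs_integral_le_integral_abs ht).trans ?_
    refine intervalIntegral.integral_mono_on ht
      ((mul_kernel_integrable h0 ng cg _ _ _).sub (mul_kernel_integrable h0 nf cf _ _ _)).abs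
      (mul_kernel_integrable h0 hmeas habs _ _ _) fun s hs => ?_
    rw [← sub_mul, abs_mul, abs_of_nonneg (kernel_nonneg h0 hs.2)]
    refine mul_le_mul_of_nonneg_right (le_of_eq ?_) (kernel_nonneg h0 hs.2)
    rw [← abs_neg]
    congr 1
    ring
  intro t ht
  have := abs_eq_zero.1 (key t ht)
  rw [max_eq_right ht] at this
  linarith

/-! ### Visits to a set and the transfer operator -/

section Dynamics

variable {X : Type*}

/-- Points visiting `E` at some time in `{1,…,n}`, that is, `{φ_E ≤ n}`. -/
def visitPos (T : X → X) (E : Set X) (n : ℕ) : Set X := {x | ∃ l, 0 < l ∧ l ≤ n ∧ T^[l] x ∈ E}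

/-- Points visiting `E` at some time in `{0,…,n}`. -/
def visitAny (T : X → X) (E : Set X) (n : ℕ) : Set X := {x | ∃ l, l ≤ n ∧ T^[l] x ∈ E}

lemma visitPos_mono (T : X → X) (E : Set X) {m n : ℕ} (h : m ≤ n) :
    visitPos T E m ⊆ visitPos T E n := fun _ ⟨l, h0, h1, h2⟩ => ⟨l, h0, h1.trans h, h2⟩

lemma visitAny_subset (T : X → X) (E : Set X) (n : ℕ) :
    visitAny T E n ⊆ E ∪ visitPos T E n := by
  rintro x ⟨l, hl, hx⟩
  rcases Nat.eq_zero_or_pos l with rfl | h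
  · exact Or.inl hx
  · exact Or.inr ⟨l, h, hl, hx⟩

lemma visitPos_subset_visitAny (T : X → X) (E : Set X) (n : ℕ) :
    visitPos T E n ⊆ visitAny T E n := fun _ ⟨l, _, h1, h2⟩ => ⟨l, h1, h2⟩

variable [MeasurableSpace X]

lemma measurableSet_visitPos {T : X → X} (hT : Measurable T) {E : Set X} (hE : MeasurableSet E)
    (n : ℕ) : MeasurableSet (visitPos T E n) := by
  have : visitPos T E n = ⋃ l, ⋃ (_ : 0 < l), ⋃ (_ : l ≤ n), T^[l] ⁻¹' E := by
    ext x; simp only [visitPos, Set.mem_ofPred_eq, mem_iUnion, mem_preimage, exists_prop]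
  rw [this]
  exact MeasurableSet.iUnion fun l => MeasurableSet.iUnion fun _ => MeasurableSet.iUnion fun _ =>
    hT.iterate l hE

lemma measurableSet_visitAny {T : X → X} (hT : Measurable T) {E : Set X} (hE : MeasurableSet E)
    (n : ℕ) : MeasurableSet (visitAny T E n) := by
  have : visitAny T E n = ⋃ l, ⋃ (_ : l ≤ n), T^[l] ⁻¹' E := by
    ext x; simp [visitAny]
  rw [this]
  exact MeasurableSet.iUnion fun l => MeasurableSet.iUnion fun _ => hT.iterate l hE

/-- Decomposition of a visit in `{0,…,m}` according to the time of the last one. -/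
lemma measure_visitAny {T : X → X} (hT : Measurable T) {E : Set X} (hE : MeasurableSet E)
    (ν : Measure X) [IsFiniteMeasure ν] (m : ℕ) :
    ν.real (visitAny T E m)
      = ∑ j ∈ Finset.range (m + 1), ν.real (T^[j] ⁻¹' (E \ visitPos T E (m - j))) := by
  have hU : visitAny T E m
      = ⋃ j ∈ Finset.range (m + 1), T^[j] ⁻¹' (E \ visitPos T E (m - j)) := by
    ext x
    simp only [mem_iUnion, Finset.mem_range, mem_preimage, Set.mem_sdiff, exists_prop]
    constructor
    · rintro ⟨l, hl, hx⟩
      classical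
      have hP := Nat.findGreatest_spec (P := fun l => T^[l] x ∈ E) hl hx
      have hle := Nat.findGreatest_le (P := fun l => T^[l] x ∈ E) m
      refine ⟨_, Nat.lt_succ_of_le hle, hP, ?_⟩
      rintro ⟨i, hi0, him, hi⟩
      rw [← Function.iterate_add_apply] at hi
      exact Nat.findGreatest_is_greatest (P := fun l => T^[l] x ∈ E) (n := m)
        (k := i + Nat.findGreatest (fun l => T^[l] x ∈ E) m) (by omega) (by omega) hi
    · rintro ⟨j, hj, hx, -⟩
      exact ⟨j, by omega, hx⟩
  rw [hU, measureReal_biUnion_finset]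
  · intro i hi j hj hij
    -- A later visit excludes that the earlier one was the last.
    have key : ∀ i j : ℕ, i < j → j ≤ m → Disjoint (T^[i] ⁻¹' (E \ visitPos T E (m - i)))
        (T^[j] ⁻¹' (E \ visitPos T E (m - j))) := by
      intro i j hij hj
      rw [Set.disjoint_left]
      rintro x ⟨-, hx⟩ ⟨hx', -⟩
      refine hx ⟨j - i, by omega, by omega, ?_⟩
      rw [← Function.iterate_add_apply, Nat.sub_add_cancel hij.le]
      exact hx'
    simp only [Finset.coe_range, mem_Iio] at hi hj
    rcases lt_or_gt_of_ne hij with h | h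
    · exact key i j h (by omega)
    · exact (key j i h (by omega)).symm
  · intro j _
    exact hT.iterate j (hE.diff (measurableSet_visitPos hT hE _))

lemma sum_blocks (f : ℕ → ℝ) (c : ℕ → ℕ) (hc : Monotone c) (hc0 : c 0 = 0) (M : ℕ) :
    ∑ j ∈ Finset.range (c M), f j
      = ∑ i ∈ Finset.range M, ∑ j ∈ Finset.Ico (c i) (c (i + 1)), f j := by
  induction M with
  | zero => simp [hc0]
  | succ M ih =>
    rw [Finset.sum_range_succ, ← ih, Finset.sum_range_add_sum_Ico _ (hc (Nat.le_succ M))]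

/-- Grouping the last visits into blocks of times; on each block, the set on which the visit is the
last one is enlarged to `D i`. -/
lemma visitAny_le_blocks {T : X → X} (hT : Measurable T) {E : Set X} (hE : MeasurableSet E)
    (ν : Measure X) [IsFiniteMeasure ν] {m M : ℕ} {c : ℕ → ℕ} (hc : Monotone c) (hc0 : c 0 = 0)
    (hcM : c M = m + 1) {D : ℕ → Set X}
    (hD : ∀ i < M, ∀ j, c i ≤ j → j < c (i + 1) → E \ visitPos T E (m - j) ⊆ D i) :
    ν.real (visitAny T E m) ≤ ∑ i ∈ Finset.range M,
      (∑ j ∈ Finset.range (c (i + 1)), ν.real (T^[j] ⁻¹' D i)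
        - ∑ j ∈ Finset.range (c i), ν.real (T^[j] ⁻¹' D i)) := by
  rw [measure_visitAny hT hE, ← hcM, sum_blocks _ c hc hc0]
  refine Finset.sum_le_sum fun i hi => ?_
  rw [← Finset.sum_Ico_eq_sub _ (hc (Nat.le_succ i))]
  refine Finset.sum_le_sum fun j hj => ?_
  rw [Finset.mem_Ico] at hj
  exact measureReal_mono (preimage_mono (hD i (Finset.mem_range.1 hi) j hj.1 hj.2))

lemma blocks_le_visitAny {T : X → X} (hT : Measurable T) {E : Set X} (hE : MeasurableSet E)
    (ν : Measure X) [IsFiniteMeasure ν] {m M : ℕ} {c : ℕ → ℕ} (hc : Monotone c) (hc0 : c 0 = 0)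
    (hcM : c M = m + 1) {D : ℕ → Set X}
    (hD : ∀ i < M, ∀ j, c i ≤ j → j < c (i + 1) → D i ⊆ E \ visitPos T E (m - j)) :
    ∑ i ∈ Finset.range M,
      (∑ j ∈ Finset.range (c (i + 1)), ν.real (T^[j] ⁻¹' D i)
        - ∑ j ∈ Finset.range (c i), ν.real (T^[j] ⁻¹' D i)) ≤ ν.real (visitAny T E m) := by
  rw [measure_visitAny hT hE, ← hcM, sum_blocks _ c hc hc0]
  refine Finset.sum_le_sum fun i hi => ?_
  rw [← Finset.sum_Ico_eq_sub _ (hc (Nat.le_succ i))]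
  refine Finset.sum_le_sum fun j hj => ?_
  rw [Finset.mem_Ico] at hj
  exact measureReal_mono (preimage_mono (hD i (Finset.mem_range.1 hi) j hj.1 hj.2))

/-- The defining property of the transfer operator. -/
lemma withDensity_transferIter {μ : Measure X} [SigmaFinite μ] {T : X → X}
    (hT : MeasurePreserving T μ μ) {u : X → ℝ≥0∞} (hu : ∫⁻ x, u x ∂μ ≠ ∞) (j : ℕ) :
    μ.withDensity (transferIter T μ u j) = (μ.withDensity u).map T^[j] := by
  have : IsFiniteMeasure (μ.withDensity u) := isFiniteMeasure_withDensity hu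
  refine Measure.withDensity_rnDeriv_eq _ _ ?_
  have h := (withDensity_absolutelyContinuous μ u).map (hT.measurable.iterate j)
  rwa [(hT.iterate j).map_eq] at h

lemma setLIntegral_transferIter {μ : Measure X} [SigmaFinite μ] {T : X → X}
    (hT : MeasurePreserving T μ μ) {u : X → ℝ≥0∞} (hu : ∫⁻ x, u x ∂μ ≠ ∞) (j : ℕ)
    {D : Set X} (hD : MeasurableSet D) :
    ∫⁻ x in D, transferIter T μ u j x ∂μ = (μ.withDensity u) (T^[j] ⁻¹' D) := by
  rw [← withDensity_apply _ hD, withDensity_transferIter hT hu,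
    Measure.map_apply (hT.measurable.iterate j) hD]

/-- Integrated form of `𝒰`-uniformity: the expected number of visits to `D ⊆ Y` before time `c`
is `(1 ± η) a(c) μ(D)`, uniformly in `u ∈ 𝒰` and `D`. -/
def UnifVisits (T : X → X) (μ : Measure X) (Y : Set X) (U : Set (X → ℝ≥0∞)) (a : ℝ → ℝ) : Prop :=
  ∀ η : ℝ, 0 < η → η < 1 → ∃ N : ℕ, 0 < N ∧ ∀ c ≥ N, ∀ u ∈ U, ∀ D ⊆ Y, MeasurableSet D →
    (1 - η) * a c * μ.real D ≤ ∑ j ∈ Finset.range c, (μ.withDensity u).real (T^[j] ⁻¹' D) ∧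
    ∑ j ∈ Finset.range c, (μ.withDensity u).real (T^[j] ⁻¹' D) ≤ (1 + η) * a c * μ.real D

lemma IsUUniform.unifVisits {μ : Measure X} [SigmaFinite μ] {T : X → X}
    (hT : MeasurePreserving T μ μ) {Y : Set X} {U : Set (X → ℝ≥0∞)} {a : ℝ → ℝ}
    (ha : IsScalingFunction a) (hUD : ∀ u ∈ U, IsDensity μ u) (h : IsUUniform T μ Y U a) :
    UnifVisits T μ Y U a := by
  obtain ⟨-, -, hYfin, h⟩ := h
  intro η hη hη1
  obtain ⟨N, hN⟩ := h η hη
  refine ⟨max N 1, by positivity, fun c hc u hu D hDY hD => ?_⟩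
  have hfin_int : ∫⁻ x, u x ∂μ ≠ ∞ := by rw [(hUD u hu).2]; exact one_ne_top
  have : IsFiniteMeasure (μ.withDensity u) := isFiniteMeasure_withDensity hfin_int
  have hDfin : μ D ≠ ∞ := ((measure_mono hDY).trans_lt hYfin).ne
  have hc1 : 1 ≤ c := (le_max_right N 1).trans hc
  have hcpos : (0 : ℝ) < c := by exact_mod_cast hc1
  have hac : 0 < a c := by
    have := ha.2.1 (mem_Ici.2 le_rfl) (mem_Ici.2 hcpos.le) hcpos
    rwa [ha.1] at this
  have hae : ∀ᵐ x ∂μ.restrict D,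
      ENNReal.ofReal ((1 - η) * a c) ≤ ∑ k ∈ Finset.range c, transferIter T μ u k x ∧
      ∑ k ∈ Finset.range c, transferIter T μ u k x ≤ ENNReal.ofReal ((1 + η) * a c) := by
    filter_upwards [ae_restrict_of_ae_restrict_of_subset hDY
      (hN c ((le_max_left N 1).trans hc) u hu)] with x hx
    set S := ∑ k ∈ Finset.range c, transferIter T μ u k x
    have hS : S ≠ ∞ := by
      intro hS
      rw [hS] at hx
      norm_num at hx
      linarith
    rw [abs_le] at hx
    have h1 : (1 - η) * a c ≤ S.toReal := by
      rw [← le_div_iff₀ hac]; linarith [hx.1]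
    have h2 : S.toReal ≤ (1 + η) * a c := by
      rw [← div_le_iff₀ hac]; linarith [hx.2]
    exact ⟨(ofReal_le_iff_le_toReal hS).2 h1, (le_ofReal_iff_toReal_le hS (by positivity)).2 h2⟩
  have hsum : ∫⁻ x in D, ∑ k ∈ Finset.range c, transferIter T μ u k x ∂μ
      = ∑ j ∈ Finset.range c, (μ.withDensity u) (T^[j] ⁻¹' D) := by
    have hm : ∀ k ∈ Finset.range c, Measurable (transferIter T μ u k) :=
      fun k _ => Measure.measurable_rnDeriv _ _
    rw [lintegral_finsetSum _ hm]
    exact Finset.sum_congr rfl fun j _ => setLIntegral_transferIter hT hfin_int j hD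
  have hreal : ∑ j ∈ Finset.range c, (μ.withDensity u).real (T^[j] ⁻¹' D)
      = (∫⁻ x in D, ∑ k ∈ Finset.range c, transferIter T μ u k x ∂μ).toReal := by
    rw [hsum, toReal_sum fun j _ => measure_ne_top _ _]
    rfl
  have hfin : ∫⁻ x in D, ∑ k ∈ Finset.range c, transferIter T μ u k x ∂μ ≠ ∞ := by
    rw [hsum]
    exact (sum_lt_top.2 fun j _ => measure_lt_top _ _).ne
  have hlo := lintegral_mono_ae (hae.mono fun _ h => h.1)
  have hhi := lintegral_mono_ae (hae.mono fun _ h => h.2)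
  rw [lintegral_const, Measure.restrict_apply_univ] at hlo hhi
  have e1 := toReal_mono hfin hlo
  have e2 := toReal_mono (mul_ne_top ofReal_ne_top hDfin) hhi
  rw [toReal_mul, toReal_ofReal (mul_nonneg (by linarith) hac.le)] at e1
  rw [toReal_mul, toReal_ofReal (by positivity)] at e2
  rw [hreal]
  exact ⟨e1, e2⟩

/-- Regular variation is locally uniform, by monotonicity. -/
lemma regVary_tendsto {a : ℝ → ℝ} (ha : IsScalingFunction a) {α : ℝ} (h0 : 0 < α)
    (hreg : RegVary a α) {N c : ℕ → ℝ} (hN : Tendsto N atTop atTop) {s : ℝ} (hs : 0 ≤ s)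
    (hc0 : ∀ k, 0 ≤ c k) (hc : Tendsto (fun k => c k / N k) atTop (𝓝 s)) :
    Tendsto (fun k => a (c k) / a (N k)) atTop (𝓝 (s ^ α)) := by
  have hmono := ha.2.1.monotoneOn
  have hcont : ContinuousAt (fun x : ℝ => x ^ α) s :=
    Real.continuousAt_rpow_const s α (Or.inr h0.le)
  rw [tendsto_order]
  constructor
  · intro y hy
    rcases hs.eq_or_lt with rfl | hs'
    · rw [Real.zero_rpow h0.ne'] at hy
      filter_upwards [hN.eventually_ge_atTop 0] with k hk
      exact hy.trans_le (div_nonneg (ha.2.2.2.1 _ (hc0 k)) (ha.2.2.2.1 _ hk))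
    obtain ⟨r, hr, hr0, hrs⟩ : ∃ r : ℝ, y < r ^ α ∧ 0 < r ∧ r < s := by
      have h1 : ∀ᶠ r in 𝓝[<] s, y < r ^ α :=
        (hcont.tendsto.eventually (lt_mem_nhds hy)).filter_mono nhdsWithin_le_nhds
      obtain ⟨r, h⟩ := (h1.and (Ioo_mem_nhdsLT hs')).exists
      exact ⟨r, h.1, h.2.1, h.2.2⟩
    filter_upwards [((hreg r hr0).comp hN).eventually (lt_mem_nhds hr),
      hc.eventually (lt_mem_nhds hrs), hN.eventually_gt_atTop 0] with k h1 h2 h3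
    refine h1.trans_le (div_le_div_of_nonneg_right ?_ (ha.2.2.2.1 _ h3.le))
    refine hmono (mem_Ici.2 (by positivity)) (mem_Ici.2 (hc0 k)) ?_
    rw [lt_div_iff₀ h3] at h2
    exact h2.le
  · intro y hy
    obtain ⟨r, hr, hrs⟩ : ∃ r : ℝ, r ^ α < y ∧ s < r := by
      have h1 : ∀ᶠ r in 𝓝[>] s, r ^ α < y :=
        (hcont.tendsto.eventually (gt_mem_nhds hy)).filter_mono nhdsWithin_le_nhds
      exact (h1.and self_mem_nhdsWithin).exists
    have hr0 : 0 < r := hs.trans_lt hrs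
    filter_upwards [((hreg r hr0).comp hN).eventually (gt_mem_nhds hr),
      hc.eventually (gt_mem_nhds hrs), hN.eventually_gt_atTop 0] with k h1 h2 h3
    refine lt_of_le_of_lt (div_le_div_of_nonneg_right ?_ (ha.2.2.2.1 _ h3.le)) h1
    refine hmono (mem_Ici.2 (hc0 k)) (mem_Ici.2 (by positivity)) ?_
    rw [div_lt_iff₀ h3] at h2
    exact h2.le

/-! ### Hitting probabilities in terms of the return distribution -/

/-- Integer cut points `⌊s_i N⌋ + 1` (and `0` for `i = 0`) associated with the partition `s_i`. -/
def cutPt (α t : ℝ) (M : ℕ) (N : ℝ) (i : ℕ) : ℕ :=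
  if i = 0 then 0 else ⌊stepPt α t M i * N⌋₊ + 1

lemma cutPt_mono {α t : ℝ} (h0 : 0 < α) (ht : 0 ≤ t) (M : ℕ) {N : ℝ} (hN : 0 ≤ N) :
    Monotone (cutPt α t M N) := by
  intro i j hij
  unfold cutPt
  split_ifs with h1 h2
  · exact le_rfl
  · exact Nat.zero_le _
  · omega
  · exact Nat.succ_le_succ (Nat.floor_mono
      (mul_le_mul_of_nonneg_right (stepPt_mono h0 ht M hij) hN))

lemma cutPt_div_tendsto {α t : ℝ} (h0 : 0 < α) (ht : 0 ≤ t) (M : ℕ) {N : ℕ → ℝ}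
    (hN : Tendsto N atTop atTop) (i : ℕ) :
    Tendsto (fun k => (cutPt α t M (N k) i : ℝ) / N k) atTop (𝓝 (stepPt α t M i)) := by
  unfold cutPt
  split_ifs with h
  · subst h
    simp [stepPt_zero h0]
  · have h1 := (tendsto_nat_floor_mul_div_atTop (stepPt_nonneg (α := α) ht M i)).comp hN
    have h2 := tendsto_inv_atTop_zero.comp hN
    have h3 := h1.add h2
    rw [add_zero] at h3
    refine h3.congr fun k => ?_
    simp only [Function.comp_apply]
    push_cast
    ring

/-- The increments of `a` along the cut points, normalized by `a(N)` and perturbed by a factor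
`1 ± η`, are eventually close to `t^α / M`. -/
lemma cutPt_asymp {a : ℝ → ℝ} (ha : IsScalingFunction a) {α : ℝ} (h0 : 0 < α)
    (hreg : RegVary a α) {N : ℕ → ℝ} (hN : Tendsto N atTop atTop) {ε : ℕ → ℝ}
    (hε : ∀ k, ε k * a (N k) = 1) {t : ℝ} (ht : 0 < t) {M : ℕ} (hM : 0 < M) {θ : ℝ}
    (hθ : 0 < θ) :
    ∃ η : ℝ, 0 < η ∧ η < 1 ∧ ∀ N0 : ℕ, ∀ᶠ k in atTop,
      (∀ i, 0 < i → N0 ≤ cutPt α t M (N k) i) ∧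
      ∀ i ∈ Finset.range M,
        (1 + η) * (ε k * a (cutPt α t M (N k) (i + 1))) - (1 - η) * (ε k * a (cutPt α t M (N k) i))
          ≤ t ^ α / M + θ / M ∧
        t ^ α / M - θ / M ≤
        (1 - η) * (ε k * a (cutPt α t M (N k) (i + 1)))
          - (1 + η) * (ε k * a (cutPt α t M (N k) i)) := by
  have hMr : (0 : ℝ) < M := by exact_mod_cast hM
  have hta : 0 < t ^ α := Real.rpow_pos_of_pos ht _
  set η : ℝ := min (1 / 2) (θ / M / (2 * t ^ α + 1)) with hη
  have hηpos : 0 < η := lt_min (by norm_num) (by positivity)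
  have hη1 : η < 1 := (min_le_left _ _).trans_lt (by norm_num)
  have hηt : 2 * η * t ^ α < θ / M := by
    have h1 : η ≤ θ / M / (2 * t ^ α + 1) := min_le_right _ _
    rw [le_div_iff₀ (by positivity)] at h1
    nlinarith
  refine ⟨η, hηpos, hη1, fun N0 => ?_⟩
  have hlim : ∀ i, Tendsto (fun k => ε k * a (cutPt α t M (N k) i)) atTop
      (𝓝 (stepPt α t M i ^ α)) := by
    intro i
    refine (regVary_tendsto ha h0 hreg hN (stepPt_nonneg ht.le M i)
      (fun k => Nat.cast_nonneg _) (cutPt_div_tendsto h0 ht.le M hN i)).congr fun k => ?_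
    have hne : a (N k) ≠ 0 := right_ne_zero_of_mul_eq_one (hε k)
    rw [div_eq_iff hne]
    linear_combination (-(a (cutPt α t M (N k) i))) * hε k
  have hs1 : 0 < stepPt α t M 1 := by
    unfold stepPt
    positivity
  have hpow : ∀ i ≤ M, stepPt α t M i ^ α ≤ t ^ α := fun i hi =>
    Real.rpow_le_rpow (stepPt_nonneg ht.le M i) (stepPt_le h0 ht.le hM hi) h0.le
  have hbig : ∀ᶠ k in atTop, ∀ i, 0 < i → N0 ≤ cutPt α t M (N k) i := by
    filter_upwards [(Tendsto.const_mul_atTop hs1 hN).eventually_ge_atTop (N0 : ℝ),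
      hN.eventually_ge_atTop 0] with k hk hk0 i hi
    refine le_trans ?_ (cutPt_mono h0 ht.le M hk0 (show 1 ≤ i from hi))
    have := Nat.le_floor hk
    simp only [cutPt, one_ne_zero, if_false]
    omega
  have hall : ∀ᶠ k in atTop, ∀ i ∈ Finset.range M,
        (1 + η) * (ε k * a (cutPt α t M (N k) (i + 1))) - (1 - η) * (ε k * a (cutPt α t M (N k) i))
          ≤ t ^ α / M + θ / M ∧
        t ^ α / M - θ / M ≤
        (1 - η) * (ε k * a (cutPt α t M (N k) (i + 1)))
          - (1 + η) * (ε k * a (cutPt α t M (N k) i)) := by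
    refine (Filter.eventually_all_finset _).2 fun i hi => ?_
    have hi' := Finset.mem_range.1 hi
    have hd := stepPt_diff h0 ht.le M i
    have p1 := hpow i hi'.le
    have p2 := hpow (i + 1) hi'
    have q1 := ((hlim (i + 1)).const_mul (1 + η)).sub ((hlim i).const_mul (1 - η))
    have q2 := ((hlim (i + 1)).const_mul (1 - η)).sub ((hlim i).const_mul (1 + η))
    have r1 : (1 + η) * stepPt α t M (i + 1) ^ α - (1 - η) * stepPt α t M i ^ α
        < t ^ α / M + θ / M := by nlinarith
    have r2 : t ^ α / M - θ / M
        < (1 - η) * stepPt α t M (i + 1) ^ α - (1 + η) * stepPt α t M i ^ α := by nlinarith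
    filter_upwards [q1.eventually (gt_mem_nhds r1), q2.eventually (lt_mem_nhds r2)] with k h1 h2
    exact ⟨h1.le, h2.le⟩
  exact hbig.and hall

/-- The distribution function, under `μ_E`, of the return time scaled by `1/N`. -/
def retDF (μ : Measure X) (T : X → X) (E : Set X) (N p : ℝ) : ℝ :=
  condProb μ E (visitPos T E ⌊p * N⌋₊)

lemma condProb_mem (μ : Measure X) {E : Set X} (hE0 : μ E ≠ 0) (hE : μ E ≠ ∞) (A : Set X) :
    condProb μ E A ∈ Icc (0 : ℝ) 1 := by
  refine ⟨toReal_nonneg, ?_⟩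
  have : μ (E ∩ A) / μ E ≤ 1 := by
    rw [ENNReal.div_le_iff hE0 hE, one_mul]
    exact measure_mono inter_subset_left
  exact (toReal_mono one_ne_top this).trans_eq toReal_one

lemma real_diff_visitPos {μ : Measure X} {T : X → X} (hT : Measurable T) {E : Set X}
    (hE : MeasurableSet E) (hE0 : μ E ≠ 0) (hEf : μ E ≠ ∞) (n : ℕ) :
    μ.real (E \ visitPos T E n) = (1 - condProb μ E (visitPos T E n)) * μ.real E := by
  have h := measureReal_inter_add_sdiff₀ (μ := μ) (s := E) (t := visitPos T E n)
    (measurableSet_visitPos hT hE n).nullMeasurableSet hEf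
  have hpos : 0 < μ.real E := toReal_pos hE0 hEf
  have h2 : condProb μ E (visitPos T E n) * μ.real E = μ.real (E ∩ visitPos T E n) := by
    rw [condProb, toReal_div]
    exact div_mul_cancel₀ _ hpos.ne'
  linarith

variable {μ : Measure X} {T : X → X} {Y : Set X} {U : Set (X → ℝ≥0∞)} {a : ℝ → ℝ}

/-- Small sets are unlikely to contain the starting point, uniformly over `𝒰`. -/
lemma UnifVisits.start_small (hunif : UnifVisits T μ Y U a)
    {E : ℕ → Set X} (hEY : ∀ k, E k ⊆ Y)
    (hE : ∀ k, MeasurableSet (E k)) (hE0 : Tendsto (fun k => μ.real (E k)) atTop (𝓝 0))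
    {θ : ℝ} (hθ : 0 < θ) :
    ∀ᶠ k in atTop, ∀ u ∈ U, (μ.withDensity u).real (E k) ≤ θ := by
  obtain ⟨N0, hN0, h⟩ := hunif (1 / 2) (by norm_num) (by norm_num)
  have hlim := hE0.const_mul ((1 + 1 / 2) * a N0)
  rw [mul_zero] at hlim
  filter_upwards [hlim.eventually (gt_mem_nhds hθ)] with k hk u hu
  have h1 := Finset.single_le_sum (f := fun j => (μ.withDensity u).real (T^[j] ⁻¹' E k))
    (fun j _ => measureReal_nonneg) (Finset.mem_range.2 hN0)
  simp only [Function.iterate_zero, preimage_id] at h1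
  have h2 := (h N0 le_rfl u hu (E k) (hEY k) (hE k)).2
  linarith

lemma IsDensity.isProbabilityMeasure {u : X → ℝ≥0∞} (h : IsDensity μ u) :
    IsProbabilityMeasure (μ.withDensity u) :=
  ⟨by rw [withDensity_apply _ MeasurableSet.univ, Measure.restrict_univ, h.2]⟩

/-- Asymptotic upper bound for hitting probabilities, uniform over initial densities in `𝒰`: an
upper Riemann sum of `∫₀ᵗ (1 - R(t-s)) d(s^α)`, with `R` the return distribution. -/
lemma UnifVisits.hit_upper (hT : Measurable T) (hunif : UnifVisits T μ Y U a)
    (hUD : ∀ u ∈ U, IsDensity μ u) (hY : μ Y ≠ ∞) (ha : IsScalingFunction a) {α : ℝ}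
    (h0 : 0 < α) (hreg : RegVary a α) {E : ℕ → Set X} (hEY : ∀ k, E k ⊆ Y)
    (hE : ∀ k, MeasurableSet (E k)) (hEpos : ∀ k, μ (E k) ≠ 0)
    (hE0 : Tendsto (fun k => μ.real (E k)) atTop (𝓝 0))
    {N : ℕ → ℝ} (hN : Tendsto N atTop atTop) (hNa : ∀ k, μ.real (E k) * a (N k) = 1)
    {t : ℝ} (ht : 0 ≤ t) (M : ℕ) (hM : 0 < M) (θ : ℝ) (hθ : 0 < θ) :
    ∀ᶠ k in atTop, ∀ u ∈ U, (μ.withDensity u).real (visitAny T (E k) ⌊t * N k⌋₊) ≤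
      ∑ i ∈ Finset.range M,
        (1 - retDF μ T (E k) (N k) (t - stepPt α t M (i + 1))) * (t ^ α / M) + θ := by
  have hMr : (0 : ℝ) < M := by exact_mod_cast hM
  rcases ht.eq_or_lt with rfl | ht
  · filter_upwards [hunif.start_small hEY hE hE0 hθ] with k hk u hu
    have e : visitAny T (E k) ⌊0 * N k⌋₊ = E k := by
      ext x
      simp [visitAny]
    rw [e, Real.zero_rpow h0.ne']
    simpa using hk u hu
  obtain ⟨η, hη, hη1, hcut⟩ := cutPt_asymp ha h0 hreg hN hNa ht hM hθ
  obtain ⟨N0, hN0, hvis⟩ := hunif η hη hη1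
  filter_upwards [hcut N0, hN.eventually_ge_atTop 0] with k ⟨hk1, hk2⟩ hNk u hu
  have := (hUD u hu).isProbabilityMeasure
  have hEf : μ (E k) ≠ ∞ := ((measure_mono (hEY k)).trans_lt hY.lt_top).ne
  set c := cutPt α t M (N k) with hc
  set D : ℕ → Set X := fun i =>
    E k \ visitPos T (E k) ⌊(t - stepPt α t M (i + 1)) * N k⌋₊ with hD
  have hcM : c M = ⌊t * N k⌋₊ + 1 := by
    simp only [hc, cutPt, hM.ne', if_false, stepPt_self α t hM]
  have hblocks := visitAny_le_blocks hT (hE k) (μ.withDensity u) (m := ⌊t * N k⌋₊) (M := M)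
    (c := c) (cutPt_mono h0 ht.le M hNk) (by simp [hc, cutPt]) hcM (D := D) (by
      intro i hi j _ hj
      refine sdiff_subset_sdiff_right (visitPos_mono T (E k) ?_)
      simp only [hc, cutPt, Nat.succ_ne_zero, if_false] at hj
      -- `⌊x - y⌋ + ⌊y⌋ ≤ ⌊x⌋`
      have h1 : ⌊(t - stepPt α t M (i + 1)) * N k⌋₊ + ⌊stepPt α t M (i + 1) * N k⌋₊
          ≤ ⌊t * N k⌋₊ := by
        refine Nat.le_floor ?_
        push_cast
        have e1 := Nat.floor_le (a := (t - stepPt α t M (i + 1)) * N k)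
          (mul_nonneg (sub_nonneg.2 (stepPt_le h0 ht.le hM hi)) hNk)
        have e2 := Nat.floor_le (a := stepPt α t M (i + 1) * N k)
          (mul_nonneg (stepPt_nonneg ht.le _ _) hNk)
        nlinarith
      omega)
  refine hblocks.trans ?_
  have hsum : ∑ i ∈ Finset.range M,
        (1 - retDF μ T (E k) (N k) (t - stepPt α t M (i + 1))) * (t ^ α / M) + θ
      = ∑ i ∈ Finset.range M,
        ((1 - retDF μ T (E k) (N k) (t - stepPt α t M (i + 1))) * (t ^ α / M) + θ / M) := by
    rw [Finset.sum_add_distrib, Finset.sum_const, Finset.card_range, nsmul_eq_mul,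
      mul_div_cancel₀ _ hMr.ne']
  rw [hsum]
  refine Finset.sum_le_sum fun i hi => ?_
  have hDY : D i ⊆ Y := sdiff_subset.trans (hEY k)
  have hDm : MeasurableSet (D i) := (hE k).diff (measurableSet_visitPos hT (hE k) _)
  have hmu : μ.real (D i) = (1 - retDF μ T (E k) (N k) (t - stepPt α t M (i + 1))) * μ.real (E k) :=
    real_diff_visitPos hT (hE k) (hEpos k) hEf _
  set ρ := retDF μ T (E k) (N k) (t - stepPt α t M (i + 1)) with hρ
  have hρ01 : ρ ∈ Icc (0 : ℝ) 1 := condProb_mem μ (hEpos k) hEf _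
  have b1 := (hvis (c (i + 1)) (hk1 _ (Nat.succ_pos i)) u hu (D i) hDY hDm).2
  have b2 : (1 - η) * a (c i) * μ.real (D i)
      ≤ ∑ j ∈ Finset.range (c i), (μ.withDensity u).real (T^[j] ⁻¹' D i) := by
    rcases Nat.eq_zero_or_pos i with rfl | hi0
    · have : c 0 = 0 := by simp [hc, cutPt]
      simp [this, ha.1]
    · exact (hvis (c i) (hk1 _ hi0) u hu (D i) hDY hDm).1
  have b3 := mul_le_mul_of_nonneg_left (hk2 i hi).1 (sub_nonneg.2 hρ01.2)
  have b4 : (1 - ρ) * (θ / M) ≤ 1 * (θ / M) :=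
    mul_le_mul_of_nonneg_right (by linarith [hρ01.1]) (by positivity)
  rw [hmu] at b1 b2
  linarith

/-- The matching asymptotic lower bound, by a lower Riemann sum. -/
lemma UnifVisits.hit_lower (hT : Measurable T) (hunif : UnifVisits T μ Y U a)
    (hUD : ∀ u ∈ U, IsDensity μ u) (hY : μ Y ≠ ∞) (ha : IsScalingFunction a) {α : ℝ}
    (h0 : 0 < α) (hreg : RegVary a α) {E : ℕ → Set X} (hEY : ∀ k, E k ⊆ Y)
    (hE : ∀ k, MeasurableSet (E k)) (hEpos : ∀ k, μ (E k) ≠ 0)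
    {N : ℕ → ℝ} (hN : Tendsto N atTop atTop) (hNa : ∀ k, μ.real (E k) * a (N k) = 1)
    {t : ℝ} (ht : 0 ≤ t) (M : ℕ) (hM : 0 < M) (θ : ℝ) (hθ : 0 < θ) :
    ∀ᶠ k in atTop, ∀ u ∈ U, ∑ i ∈ Finset.range M,
        (1 - retDF μ T (E k) (N k) (t - stepPt α t M i)) * (t ^ α / M) - θ ≤
      (μ.withDensity u).real (visitAny T (E k) ⌊t * N k⌋₊) := by
  have hMr : (0 : ℝ) < M := by exact_mod_cast hM
  rcases ht.eq_or_lt with rfl | ht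
  · refine Eventually.of_forall fun k u _ => ?_
    rw [Real.zero_rpow h0.ne']
    have : 0 ≤ (μ.withDensity u).real (visitAny T (E k) ⌊0 * N k⌋₊) := measureReal_nonneg
    simp only [zero_div, mul_zero, Finset.sum_const_zero]
    linarith
  obtain ⟨η, hη, hη1, hcut⟩ := cutPt_asymp ha h0 hreg hN hNa ht hM hθ
  obtain ⟨N0, hN0, hvis⟩ := hunif η hη hη1
  filter_upwards [hcut N0, hN.eventually_ge_atTop 0] with k ⟨hk1, hk2⟩ hNk u hu
  have := (hUD u hu).isProbabilityMeasure
  have hEf : μ (E k) ≠ ∞ := ((measure_mono (hEY k)).trans_lt hY.lt_top).ne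
  set c := cutPt α t M (N k) with hc
  set D : ℕ → Set X := fun i =>
    E k \ visitPos T (E k) ⌊(t - stepPt α t M i) * N k⌋₊ with hD
  have hcM : c M = ⌊t * N k⌋₊ + 1 := by
    simp only [hc, cutPt, hM.ne', if_false, stepPt_self α t hM]
  have hblocks := blocks_le_visitAny hT (hE k) (μ.withDensity u) (m := ⌊t * N k⌋₊) (M := M)
    (c := c) (cutPt_mono h0 ht.le M hNk) (by simp [hc, cutPt]) hcM (D := D) (by
      intro i hi j hj _
      refine sdiff_subset_sdiff_right (visitPos_mono T (E k) ?_)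
      rcases Nat.eq_zero_or_pos i with rfl | hi0
      · simp [stepPt_zero h0]
      simp only [hc, cutPt, hi0.ne', if_false] at hj
      -- `⌊x⌋ ≤ ⌊x - y⌋ + ⌊y⌋ + 1`
      have h1 : ⌊t * N k⌋₊
          < ⌊(t - stepPt α t M i) * N k⌋₊ + ⌊stepPt α t M i * N k⌋₊ + 2 := by
        refine (Nat.floor_lt (mul_nonneg ht.le hNk)).2 ?_
        push_cast
        have e1 := Nat.lt_floor_add_one ((t - stepPt α t M i) * N k)
        have e2 := Nat.lt_floor_add_one (stepPt α t M i * N k)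
        nlinarith
      omega)
  refine le_trans ?_ hblocks
  have hsum : ∑ i ∈ Finset.range M,
        (1 - retDF μ T (E k) (N k) (t - stepPt α t M i)) * (t ^ α / M) - θ
      = ∑ i ∈ Finset.range M,
        ((1 - retDF μ T (E k) (N k) (t - stepPt α t M i)) * (t ^ α / M) - θ / M) := by
    rw [Finset.sum_sub_distrib, Finset.sum_const, Finset.card_range, nsmul_eq_mul,
      mul_div_cancel₀ _ hMr.ne']
  rw [hsum]
  refine Finset.sum_le_sum fun i hi => ?_
  have hDY : D i ⊆ Y := sdiff_subset.trans (hEY k)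
  have hDm : MeasurableSet (D i) := (hE k).diff (measurableSet_visitPos hT (hE k) _)
  have hmu : μ.real (D i) = (1 - retDF μ T (E k) (N k) (t - stepPt α t M i)) * μ.real (E k) :=
    real_diff_visitPos hT (hE k) (hEpos k) hEf _
  set ρ := retDF μ T (E k) (N k) (t - stepPt α t M i) with hρ
  have hρ01 : ρ ∈ Icc (0 : ℝ) 1 := condProb_mem μ (hEpos k) hEf _
  have b1 := (hvis (c (i + 1)) (hk1 _ (Nat.succ_pos i)) u hu (D i) hDY hDm).1
  have b2 : ∑ j ∈ Finset.range (c i), (μ.withDensity u).real (T^[j] ⁻¹' D i)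
      ≤ (1 + η) * a (c i) * μ.real (D i) := by
    rcases Nat.eq_zero_or_pos i with rfl | hi0
    · have : c 0 = 0 := by simp [hc, cutPt]
      simp [this, ha.1]
    · exact (hvis (c i) (hk1 _ hi0) u hu (D i) hDY hDm).2
  have b3 := mul_le_mul_of_nonneg_left (hk2 i hi).2 (sub_nonneg.2 hρ01.2)
  have b4 : (1 - ρ) * (θ / M) ≤ 1 * (θ / M) :=
    mul_le_mul_of_nonneg_right (by linarith [hρ01.1]) (by positivity)
  rw [hmu] at b1 b2
  linarith

/-! ### Regeneration: comparing return and hitting times -/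

lemma mul_phiRT_le_iff {X : Type*} {T : X → X} {E : Set X} {x : X} {c d : ℝ≥0∞} (hc : c ≠ 0)
    (hd : d ≠ ∞) :
    c * phiRT T E x ≤ d ↔ ∃ l : ℕ, 0 < l ∧ T^[l] x ∈ E ∧ c * l ≤ d := by
  classical
  constructor
  · intro h
    by_cases hne : ∃ n : ℕ, 0 < n ∧ T^[n] x ∈ E
    · refine ⟨Nat.find hne, (Nat.find_spec hne).1, (Nat.find_spec hne).2, le_trans ?_ h⟩
      gcongr
      exact le_iInf₂ fun n hn => by exact_mod_cast Nat.find_min' hne hn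
    · have : phiRT T E x = ∞ := by
        refine iInf₂_eq_top.2 fun n hn => (hne ⟨n, hn⟩).elim
      rw [this, mul_top hc] at h
      exact (hd (top_le_iff.1 h)).elim
  · rintro ⟨l, hl, hx, h⟩
    refine le_trans ?_ h
    gcongr
    exact iInf₂_le l ⟨hl, hx⟩

lemma setOf_phiRT_le {X : Type*} (T : X → X) (E : Set X) (n : ℕ) :
    {x | phiRT T E x ≤ (n : ℝ≥0∞)} = visitPos T E n := by
  ext x
  have := mul_phiRT_le_iff (T := T) (E := E) (x := x) one_ne_zero (natCast_ne_top n)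
  simp only [one_mul, Nat.cast_le] at this
  simp only [visitPos, Set.mem_ofPred_eq, this]
  exact exists_congr fun l => by tauto

lemma setOf_mul_phiRT_le {X : Type*} (T : X → X) (E : Set X) {N : ℝ} (hN : 0 < N) (t : ℝ) :
    {x | ENNReal.ofReal (1 / N) * phiRT T E x ≤ ENNReal.ofReal t}
      = visitPos T E ⌊t * N⌋₊ := by
  ext x
  have hpos : 0 < 1 / N := by positivity
  simp only [visitPos, Set.mem_ofPred_eq,
    mul_phiRT_le_iff (T := T) (E := E) (x := x) (ofReal_pos.2 hpos).ne' (ofReal_ne_top (r := t))]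
  refine exists_congr fun l => and_congr_right fun hl => ?_
  have hl' : (0 : ℝ) < l := by exact_mod_cast hl
  have : ENNReal.ofReal (1 / N) * (l : ℝ≥0∞) ≤ ENNReal.ofReal t ↔ l ≤ ⌊t * N⌋₊ := by
    rw [← ofReal_natCast l, ← ofReal_mul hpos.le, ofReal_le_ofReal_iff', Nat.le_floor_iff' hl.ne',
      one_div_mul_eq_div, div_le_iff₀ hN]
    have : ¬ (l / N ≤ 0) := not_le.2 (by positivity)
    tauto
  tauto

lemma condProb_mono (μ : Measure X) {E A B : Set X} (hE0 : μ E ≠ 0) (hE : μ E ≠ ∞)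
    (h : E ∩ A ⊆ E ∩ B) : condProb μ E A ≤ condProb μ E B :=
  toReal_mono (div_ne_top ((measure_mono inter_subset_left).trans_lt hE.lt_top).ne hE0)
    (ENNReal.div_le_div_right (measure_mono h) _)

/-- The law at time `z` of the process started from `μ_E`, as a mixture. -/
lemma regen_mixture [SigmaFinite μ] (hT : MeasurePreserving T μ μ) {E : Set X}
    (hE : MeasurableSet E) (hE0 : μ E ≠ 0) (hEf : μ E ≠ ∞) {z : ℕ} {w' : ℕ → X → ℝ≥0∞}
    {π : ℕ → ℝ≥0∞}
    (hw : ∀ᵐ x ∂μ, transferIter T μ (E.indicator fun _ => (μ E)⁻¹) z x = ∑' ι, π ι * w' ι x)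
    (hwD : ∀ ι, IsDensity μ (w' ι)) {A : Set X} (hA : MeasurableSet A) :
    μ (E ∩ T^[z] ⁻¹' A) / μ E = ∑' ι, π ι * (μ.withDensity (w' ι)) A := by
  have hfin_int : ∫⁻ x, E.indicator (fun _ => (μ E)⁻¹) x ∂μ ≠ ∞ := by
    rw [lintegral_indicator hE, setLIntegral_const, ENNReal.inv_mul_cancel hE0 hEf]
    exact one_ne_top
  have hTA : MeasurableSet (T^[z] ⁻¹' A) := hT.measurable.iterate z hA
  have h1 := setLIntegral_transferIter hT hfin_int z hA
  rw [withDensity_apply _ hTA, setLIntegral_indicator hE, setLIntegral_const] at h1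
  rw [ENNReal.div_eq_inv_mul, ← h1, lintegral_congr_ae (ae_restrict_of_ae hw),
    lintegral_tsum fun ι => ((hwD ι).1.const_mul _).aemeasurable]
  refine tsum_congr fun ι => ?_
  rw [lintegral_const_mul _ (hwD ι).1, withDensity_apply _ hA]

lemma regen_step [SigmaFinite μ] (hT : MeasurePreserving T μ μ) {v u : X → ℝ≥0∞} {ι : ℕ}
    (hv : IsDensity μ v) (hu : transferIter T μ v ι =ᵐ[μ] u) {A : Set X} (hA : MeasurableSet A) :
    (μ.withDensity v) (T^[ι] ⁻¹' A) = (μ.withDensity u) A := by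
  rw [← withDensity_congr_ae hu, withDensity_transferIter hT (by rw [hv.2]; exact one_ne_top),
    Measure.map_apply (hT.measurable.iterate ι) hA]

/-- Upper bound for the return distribution: after the initial `z` steps the component `ι` of
the mixture avoids `Y ⊇ E` until it has turned into an element of `𝒰` at time `ι`. -/
lemma regen_upper [SigmaFinite μ] (hT : MeasurePreserving T μ μ) (hUD : ∀ u ∈ U, IsDensity μ u)
    {E : Set X} (hEY : E ⊆ Y) (hE : MeasurableSet E) (hE0 : μ E ≠ 0) (hEf : μ E ≠ ∞) {z : ℕ}
    {w' : ℕ → X → ℝ≥0∞} {π : ℕ → ℝ≥0∞}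
    (hw : ∀ᵐ x ∂μ, transferIter T μ (E.indicator fun _ => (μ E)⁻¹) z x = ∑' ι, π ι * w' ι x)
    (hwD : ∀ ι, IsDensity μ (w' ι)) (hπ1 : ∑' ι, π ι = 1)
    (hvanish : ∀ ι (j : ℕ), 1 ≤ j → j < ι →
      ∀ᵐ x ∂μ.restrict Y, transferIter T μ (w' ι) j x = 0)
    (hU' : ∀ ι, ∃ u ∈ U, transferIter T μ (w' ι) ι =ᵐ[μ] u) {n : ℕ} {B : ℝ}
    (hB : ∀ u ∈ U, (μ.withDensity u).real (visitAny T E n) ≤ B) :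
    condProb μ E (visitPos T E n) ≤ condProb μ E (visitPos T E z) + B := by
  have hB0 : 0 ≤ B := by
    obtain ⟨u, hu, -⟩ := hU' 0
    exact measureReal_nonneg.trans (hB u hu)
  have hcomp : ∀ ι, (μ.withDensity (w' ι)) (visitPos T E n) ≤ ENNReal.ofReal B := by
    intro ι
    have hfin : ∫⁻ x, w' ι x ∂μ ≠ ∞ := by rw [(hwD ι).2]; exact one_ne_top
    obtain ⟨u, hu, hue⟩ := hU' ι
    have := (hUD u hu).isProbabilityMeasure
    have hsub : visitPos T E n ⊆
        (⋃ j ∈ Finset.Ico 1 ι, T^[j] ⁻¹' E) ∪ T^[ι] ⁻¹' visitAny T E n := by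
      rintro x ⟨l, hl0, hln, hx⟩
      rcases lt_or_ge l ι with h | h
      · exact Or.inl (mem_biUnion (Finset.mem_coe.2 (Finset.mem_Ico.2 ⟨hl0, h⟩)) hx)
      · refine Or.inr ⟨l - ι, by omega, ?_⟩
        rw [← Function.iterate_add_apply, Nat.sub_add_cancel h]
        exact hx
    have hnull : (μ.withDensity (w' ι)) (⋃ j ∈ Finset.Ico 1 ι, T^[j] ⁻¹' E) = 0 := by
      refine (measure_biUnion_null_iff (Finset.countable_toSet _)).2 fun j hj => ?_
      have hj' := Finset.mem_Ico.1 (Finset.mem_coe.1 hj)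
      rw [← setLIntegral_transferIter hT hfin j hE]
      exact (lintegral_congr_ae (ae_restrict_of_ae_restrict_of_subset hEY
        (hvanish ι j hj'.1 hj'.2))).trans lintegral_zero
    refine (measure_mono hsub).trans ((measure_union_le _ _).trans ?_)
    rw [hnull, zero_add, regen_step hT (hwD ι) hue (measurableSet_visitAny hT.measurable hE n)]
    rw [le_ofReal_iff_toReal_le (measure_ne_top _ _) hB0]
    exact hB u hu
  have hmix : μ (E ∩ T^[z] ⁻¹' visitPos T E n) / μ E ≤ ENNReal.ofReal B := by
    rw [regen_mixture hT hE hE0 hEf hw hwD (measurableSet_visitPos hT.measurable hE n)]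
    calc ∑' ι, π ι * (μ.withDensity (w' ι)) (visitPos T E n)
        ≤ ∑' ι, π ι * ENNReal.ofReal B :=
          ENNReal.tsum_le_tsum fun ι => mul_le_mul_right (hcomp ι) _
      _ = ENNReal.ofReal B := by rw [ENNReal.tsum_mul_right, hπ1, one_mul]
  have hsub : E ∩ visitPos T E n ⊆
      (E ∩ visitPos T E z) ∪ (E ∩ T^[z] ⁻¹' visitPos T E n) := by
    rintro x ⟨hxE, l, hl0, hln, hx⟩
    rcases le_or_gt l z with h | h
    · exact Or.inl ⟨hxE, l, hl0, h, hx⟩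
    · refine Or.inr ⟨hxE, l - z, by omega, by omega, ?_⟩
      rw [← Function.iterate_add_apply, Nat.sub_add_cancel h.le]
      exact hx
  have htot : μ (E ∩ visitPos T E n) / μ E
      ≤ μ (E ∩ visitPos T E z) / μ E + ENNReal.ofReal B := by
    refine (ENNReal.div_le_div_right ((measure_mono hsub).trans (measure_union_le _ _)) _).trans ?_
    rw [ENNReal.add_div]
    gcongr
  have hne : μ (E ∩ visitPos T E z) / μ E ≠ ∞ :=
    div_ne_top ((measure_mono inter_subset_left).trans_lt hEf.lt_top).ne hE0
  have := toReal_mono (add_ne_top.2 ⟨hne, ofReal_ne_top⟩) htot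
  rwa [toReal_add hne ofReal_ne_top, toReal_ofReal hB0] at this

/-- Lower bound for the return distribution. The components `ι` with `P ι` (the late ones) are
discarded, at the cost of their total weight. -/
lemma regen_lower [SigmaFinite μ] (hT : MeasurePreserving T μ μ) (hUD : ∀ u ∈ U, IsDensity μ u)
    {E : Set X} (hE : MeasurableSet E) (hE0 : μ E ≠ 0) (hEf : μ E ≠ ∞) {z : ℕ}
    {w' : ℕ → X → ℝ≥0∞} {π : ℕ → ℝ≥0∞}
    (hw : ∀ᵐ x ∂μ, transferIter T μ (E.indicator fun _ => (μ E)⁻¹) z x = ∑' ι, π ι * w' ι x)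
    (hwD : ∀ ι, IsDensity μ (w' ι)) (hπ1 : ∑' ι, π ι = 1)
    (hU' : ∀ ι, ∃ u ∈ U, transferIter T μ (w' ι) ι =ᵐ[μ] u) {m n : ℕ} {B : ℝ}
    (P : ℕ → Prop) [DecidablePred P] (hzn : z ≤ n) (hP : ∀ ι, ¬ P ι → z + ι + m ≤ n)
    (hB : ∀ u ∈ U, B ≤ (μ.withDensity u).real (visitPos T E m)) :
    B ≤ condProb μ E (visitPos T E n) + (∑' ι, if P ι then π ι else 0).toReal := by
  have hB1 : B ≤ 1 := by
    obtain ⟨u, hu, -⟩ := hU' 0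
    have := (hUD u hu).isProbabilityMeasure
    exact (hB u hu).trans measureReal_le_one
  have hcomp : ∀ ι, π ι * ENNReal.ofReal B ≤
      π ι * (μ.withDensity (w' ι)) (visitPos T E (n - z)) + if P ι then π ι else 0 := by
    intro ι
    split_ifs with h
    · calc π ι * ENNReal.ofReal B ≤ π ι * 1 :=
            mul_le_mul_right (ofReal_le_one.2 hB1) _
        _ ≤ _ := by rw [mul_one]; exact le_add_self
    · obtain ⟨u, hu, hue⟩ := hU' ι
      have := (hUD u hu).isProbabilityMeasure
      rw [add_zero]
      refine mul_le_mul_right ?_ _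
      calc ENNReal.ofReal B ≤ (μ.withDensity u) (visitPos T E m) :=
            (ofReal_le_iff_le_toReal (measure_ne_top _ _)).2 (hB u hu)
        _ = (μ.withDensity (w' ι)) (T^[ι] ⁻¹' visitPos T E m) :=
            (regen_step hT (hwD ι) hue (measurableSet_visitPos hT.measurable hE m)).symm
        _ ≤ _ := by
            refine measure_mono ?_
            rintro x ⟨l, hl0, hlm, hx⟩
            have := hP ι h
            refine ⟨l + ι, by omega, by omega, ?_⟩
            rw [Function.iterate_add_apply]
            exact hx
  have hsum : ENNReal.ofReal B ≤ μ (E ∩ T^[z] ⁻¹' visitPos T E (n - z)) / μ E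
      + ∑' ι, if P ι then π ι else 0 := by
    rw [regen_mixture hT hE hE0 hEf hw hwD (measurableSet_visitPos hT.measurable hE _),
      ← ENNReal.tsum_add]
    calc ENNReal.ofReal B = ∑' ι, π ι * ENNReal.ofReal B := by
          rw [ENNReal.tsum_mul_right, hπ1, one_mul]
      _ ≤ _ := ENNReal.tsum_le_tsum hcomp
  have hsub : E ∩ T^[z] ⁻¹' visitPos T E (n - z) ⊆ E ∩ visitPos T E n := by
    rintro x ⟨hxE, l, hl0, hln, hx⟩
    refine ⟨hxE, l + z, by omega, by omega, ?_⟩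
    rw [Function.iterate_add_apply]
    exact hx
  have htot : ENNReal.ofReal B ≤ μ (E ∩ visitPos T E n) / μ E
      + ∑' ι, if P ι then π ι else 0 := by
    refine hsum.trans ?_
    gcongr
  have hne : μ (E ∩ visitPos T E n) / μ E ≠ ∞ :=
    div_ne_top ((measure_mono inter_subset_left).trans_lt hEf.lt_top).ne hE0
  have hne2 : (∑' ι, if P ι then π ι else 0) ≠ ∞ := by
    refine ne_top_of_le_ne_top (b := ∑' ι, π ι) (by rw [hπ1]; exact one_ne_top) ?_
    refine ENNReal.tsum_le_tsum fun ι => ?_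
    split_ifs
    · exact le_rfl
    · exact zero_le
  rw [ofReal_le_iff_le_toReal (add_ne_top.2 ⟨hne, hne2⟩), toReal_add hne hne2] at htot
  exact htot

/-! ### Convergence of return and hitting distributions -/

/-- The visit counts to `Y` are at most the number of steps, so `a` grows at most linearly. -/
lemma UnifVisits.linear_growth (hunif : UnifVisits T μ Y U a) (hUD : ∀ u ∈ U, IsDensity μ u)
    (ha : IsScalingFunction a) (hYm : MeasurableSet Y) (hY : μ.real Y = 1) {u : X → ℝ≥0∞}
    (hu : u ∈ U) : ∃ B : ℝ, ∀ x, B ≤ x → a x ≤ 4 * x := by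
  obtain ⟨N, hN, h⟩ := hunif (1 / 2) (by norm_num) (by norm_num)
  have := (hUD u hu).isProbabilityMeasure
  refine ⟨N, fun x hx => ?_⟩
  have hN1 : (1 : ℝ) ≤ N := by exact_mod_cast hN
  have hx0 : 0 ≤ x := by linarith
  have hc : N ≤ ⌈x⌉₊ := by exact_mod_cast hx.trans (Nat.le_ceil x)
  have h1 := (h ⌈x⌉₊ hc u hu Y subset_rfl hYm).1
  have h2 : ∑ j ∈ Finset.range ⌈x⌉₊, (μ.withDensity u).real (T^[j] ⁻¹' Y) ≤ ⌈x⌉₊ := by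
    refine (Finset.sum_le_sum fun j _ => measureReal_le_one).trans ?_
    simp
  have h3 : a x ≤ a ⌈x⌉₊ :=
    ha.2.1.monotoneOn (mem_Ici.2 hx0) (mem_Ici.2 (Nat.cast_nonneg _)) (Nat.le_ceil x)
  have h4 := (Nat.ceil_lt_add_one hx0).le
  rw [hY] at h1
  linarith

lemma retDF_monotone (μ : Measure X) (T : X → X) {E : Set X} (hE0 : μ E ≠ 0) (hEf : μ E ≠ ∞)
    {N : ℝ} (hN : 0 ≤ N) : Monotone (retDF μ T E N) := fun _ _ hpq =>
  condProb_mono μ hE0 hEf (inter_subset_inter_right _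
    (visitPos_mono T E (Nat.floor_mono (mul_le_mul_of_nonneg_right hpq hN))))

lemma real_visitAny_le {ν : Measure X} [IsFiniteMeasure ν] (T : X → X) (E : Set X) (n : ℕ) :
    ν.real (visitAny T E n) ≤ ν.real E + ν.real (visitPos T E n) :=
  (measureReal_mono (visitAny_subset T E n)).trans (measureReal_union_le _ _)

/-- A solution of the limit equation is right-continuous, being a fractional integral. -/
lemma memF_of_volterra {α : ℝ} (hα : α ∈ Ioc (0 : ℝ) 1) {F : ℝ → ℝ} (hmono : Monotone F)
    (h01 : ∀ t, F t ∈ Icc (0 : ℝ) 1)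
    (heq : ∀ t, 0 ≤ t → F t = fracInt α (fun s => 1 - F s) t) : MemF F := by
  refine ⟨fun s t _ h => hmono h, fun t _ => h01 t, fun t ht => ?_⟩
  have hlim : Tendsto (fun s : ℝ => 2 * (s - t) ^ α) (𝓝[Ici t] t) (𝓝 0) := by
    have hc : Continuous fun s : ℝ => 2 * (s - t) ^ α :=
      continuous_const.mul
        ((Real.continuous_rpow_const hα.1.le).comp (continuous_id.sub continuous_const))
    have := (hc.tendsto t).mono_left (nhdsWithin_le_nhds (s := Ici t))
    simpa [Real.zero_rpow hα.1.ne'] using this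
  rw [ContinuousWithinAt, tendsto_iff_dist_tendsto_zero]
  refine squeeze_zero' (Eventually.of_forall fun _ => dist_nonneg) ?_ hlim
  filter_upwards [self_mem_nhdsWithin] with s hs
  rw [Real.dist_eq, heq s (ht.trans hs), heq t ht]
  refine fracInt_holder hα (measurable_const.sub hmono.measurable) (fun r => ?_) ht hs
  exact ⟨sub_nonneg.2 (h01 r).2, sub_le_self _ (h01 r).1⟩

end Dynamics

/-- Convergence to `H_α` via efficient regeneration (Theorem 4.1 of
[PSZ2]): under the stated conditions, both the normalized return- and hitting-time
distributions of the `E_k` converge, at every `t ≥ 0`, to the unique sub-distribution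
function `F` satisfying `F(t)=∫_0^t (1−F(s))·α·(t−s)^{α−1} ds` (the law of `𝓔^{1/α}·𝒢_α`). -/
theorem stmt19 {X : Type*} [MeasurableSpace X] (μ : Measure X) [SigmaFinite μ]
    (T : X → X) (hT : CEMPT T μ) (hInf : μ Set.univ = ∞)
    (a b γT : ℝ → ℝ) (ha : IsScalingFunction a)
    (α : ℝ) (hα : α ∈ Set.Ioc (0 : ℝ) 1) (hreg : RegVary a α)
    (hpde : PointwiseDualErgodic T μ a)
    (hb : ∀ x : ℝ, 0 ≤ x → b (a x) = x) (hb' : ∀ y : ℝ, 0 ≤ y → a (b y) = y)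
    (hγ : ∀ s : ℝ, 0 < s → γT s = 1 / b (1 / s))
    (U : Set (X → ℝ≥0∞)) (hUD : ∀ u ∈ U, IsDensity μ u)
    (Y : Set X) (hUY : IsUUniform T μ Y U a)
    (h1Y : (Y.indicator fun _ => (1 : ℝ≥0∞)) ∈ U)
    (E : ℕ → Set X) (hE : ∀ k, E k ⊆ Y ∧ MeasurableSet (E k) ∧ 0 < μ (E k))
    (hE0 : Tendsto (fun k => μ (E k)) atTop (𝓝 0))
    (z : ℕ → ℕ)
    (hz1 : Tendsto (fun k => (z k : ℝ) * (μ (E k)).toReal) atTop (𝓝 0))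
    (hz2 : Tendsto (fun k =>
      condProb μ (E k) {x | phiRT T (E k) x ≤ (z k : ℝ≥0∞)}) atTop (𝓝 0))
    (w' : ℕ → ℕ → X → ℝ≥0∞) (π : ℕ → ℕ → ℝ≥0∞)
    (hw : ∀ k, ∀ᵐ x ∂μ,
      transferIter T μ ((E k).indicator fun _ => (μ (E k))⁻¹) (z k) x
        = ∑' ι, π k ι * w' k ι x)
    (hwD : ∀ k ι, IsDensity μ (w' k ι))
    (hπ1 : ∀ k, ∑' ι, π k ι = 1)
    (hvanish : ∀ k ι (j : ℕ), 1 ≤ j → j < ι →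
      ∀ᵐ x ∂μ.restrict Y, transferIter T μ (w' k ι) j x = 0)
    (hU' : ∀ k ι, ∃ u ∈ U, transferIter T μ (w' k ι) ι =ᵐ[μ] u)
    (hΥ : ∀ δ : ℝ, 0 < δ →
      Tendsto (fun k => ∑' ι : ℕ,
          if δ < γT (μ (E k)).toReal * ι then π k ι else 0)
        atTop (𝓝 (0 : ℝ≥0∞))) :
    ∃ F : ℝ → ℝ, MemF F ∧
      (∀ t : ℝ, 0 ≤ t →
        F t = ∫ s in (0 : ℝ)..t, (1 - F s) * (α * (t - s) ^ (α - 1))) ∧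
      (∀ G : ℝ → ℝ, MemF G →
        (∀ t : ℝ, 0 ≤ t →
          G t = ∫ s in (0 : ℝ)..t, (1 - G s) * (α * (t - s) ^ (α - 1))) →
        ∀ t : ℝ, 0 ≤ t → G t = F t) ∧
      ∀ t : ℝ, 0 ≤ t →
        Tendsto (fun k => nrmDF μ T γT (E k) (E k) t) atTop (𝓝 (F t)) ∧
        Tendsto (fun k => nrmDF μ T γT Y (E k) t) atTop (𝓝 (F t)) := by
  have hmp : MeasurePreserving T μ μ := hT.2.toMeasurePreserving
  have hTm : Measurable T := hmp.measurable
  have h0 : 0 < α := hα.1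
  have hYm : MeasurableSet Y := hUY.1
  have hYf : μ Y ≠ ∞ := hUY.2.2.1.ne
  have hY1 : μ Y = 1 := by
    have := (hUD _ h1Y).2
    rwa [lintegral_indicator hYm, setLIntegral_const, one_mul] at this
  have hEY : ∀ k, E k ⊆ Y := fun k => (hE k).1
  have hEm : ∀ k, MeasurableSet (E k) := fun k => (hE k).2.1
  have hEpos : ∀ k, μ (E k) ≠ 0 := fun k => (hE k).2.2.ne'
  have hEf : ∀ k, μ (E k) ≠ ∞ := fun k => ((measure_mono (hEY k)).trans_lt hUY.2.2.1).ne
  have hεpos : ∀ k, 0 < μ.real (E k) := fun k => toReal_pos (hEpos k) (hEf k)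
  have hε0 : Tendsto (fun k => μ.real (E k)) atTop (𝓝 0) := by
    have := (ENNReal.tendsto_toReal zero_ne_top).comp hE0
    rwa [toReal_zero] at this
  have hunif : UnifVisits T μ Y U a := IsUUniform.unifVisits hmp ha hUD hUY
  -- the time scale `N k`, determined by `μ (E k) * a (N k) = 1`
  obtain ⟨N, hNdef⟩ : ∃ N : ℕ → ℝ, ∀ k, N k = b (1 / μ.real (E k)) := ⟨_, fun _ => rfl⟩
  have hNnn : ∀ k, 0 ≤ N k := fun k => by
    obtain ⟨x, hx, hax⟩ := ha.2.2.2.2 (1 / μ.real (E k)) (one_div_pos.2 (hεpos k)).le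
    rw [hNdef, ← hax, hb x hx]
    exact hx
  have haN : ∀ k, a (N k) = 1 / μ.real (E k) := fun k => by
    rw [hNdef]; exact hb' _ (one_div_pos.2 (hεpos k)).le
  have hNa : ∀ k, μ.real (E k) * a (N k) = 1 := fun k => by
    rw [haN]; exact mul_one_div_cancel (hεpos k).ne'
  have hNpos : ∀ k, 0 < N k := fun k => by
    refine (hNnn k).lt_of_ne fun h => ?_
    have := hNa k
    rw [← h, ha.1, mul_zero] at this
    exact zero_ne_one this
  have hγN : ∀ k, γT (μ (E k)).toReal = 1 / N k := fun k => by
    rw [hNdef]; exact hγ _ (hεpos k)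
  have hN : Tendsto N atTop atTop := by
    rw [tendsto_atTop]
    intro B
    have hinv : Tendsto (fun k => 1 / μ.real (E k)) atTop atTop := by
      simp only [one_div]
      exact (tendsto_nhdsWithin_iff.2 ⟨hε0, Eventually.of_forall hεpos⟩).inv_tendsto_nhdsGT_zero
    filter_upwards [hinv.eventually_gt_atTop (a (max B 0))] with k hk
    by_contra hlt
    have h1 : N k ≤ max B 0 := (not_le.1 hlt).le.trans (le_max_left _ _)
    have h2 := ha.2.1.monotoneOn (mem_Ici.2 (hNnn k)) (mem_Ici.2 (le_max_right B 0)) h1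
    rw [haN] at h2
    linarith
  -- the waiting times `z k` are negligible on the scale `N k`
  have hzN : ∀ δ > 0, ∀ᶠ k in atTop, (z k : ℝ) ≤ δ * N k := by
    intro δ hδ
    obtain ⟨B, hB⟩ := hunif.linear_growth hUD ha hYm (by simp [Measure.real, hY1]) h1Y
    filter_upwards [hN.eventually_ge_atTop B,
      hz1.eventually (gt_mem_nhds (show (0 : ℝ) < δ / 4 by positivity))] with k hk hzk
    have e : (z k : ℝ) = z k * (μ (E k)).toReal * a (N k) := by
      have := hNa k
      rw [Measure.real] at this
      rw [mul_assoc, this, mul_one]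
    have hap : 0 ≤ a (N k) := ha.2.2.2.1 _ (hNnn k)
    calc (z k : ℝ) = z k * (μ (E k)).toReal * a (N k) := e
      _ ≤ δ / 4 * (4 * N k) := mul_le_mul hzk.le (hB _ hk) hap (by positivity)
      _ = δ * N k := by ring
  have hnrm : ∀ A k t, nrmDF μ T γT A (E k) t = condProb μ A (visitPos T (E k) ⌊t * N k⌋₊) := by
    intro A k t
    rw [nrmDF, hγN, setOf_mul_phiRT_le T (E k) (hNpos k)]
  have hup : ∀ t : ℝ, 0 ≤ t → ∀ M : ℕ, 0 < M → ∀ θ > 0, ∀ᶠ k in atTop,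
      retDF μ T (E k) (N k) t ≤ ∑ i ∈ Finset.range M,
        (1 - retDF μ T (E k) (N k) (t - stepPt α t M (i + 1))) * (t ^ α / M) + θ := by
    intro t ht M hM θ hθ
    filter_upwards [hunif.hit_upper hTm hUD hYf ha h0 hreg hEY hEm hEpos hε0 hN hNa ht M hM
      (θ / 2) (half_pos hθ), hz2.eventually (gt_mem_nhds (half_pos hθ))] with k hk hzk
    rw [setOf_phiRT_le] at hzk
    have := regen_upper hmp hUD (hEY k) (hEm k) (hEpos k) (hEf k) (hw k) (hwD k) (hπ1 k)
      (hvanish k) (hU' k) hk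
    rw [retDF]
    linarith
  have hlow : ∀ t δ : ℝ, 0 ≤ t → 0 < δ → ∀ M : ℕ, 0 < M → ∀ θ > 0, ∀ᶠ k in atTop,
      ∑ i ∈ Finset.range M,
        (1 - retDF μ T (E k) (N k) (t - stepPt α t M i)) * (t ^ α / M) - θ ≤
      retDF μ T (E k) (N k) (t + δ) := by
    intro t δ ht hδ M hM θ hθ
    have hθ3 : 0 < θ / 3 := by positivity
    have htail := (ENNReal.tendsto_toReal zero_ne_top).comp (hΥ (δ / 2) (half_pos hδ))
    rw [toReal_zero] at htail
    filter_upwards [hunif.hit_lower hTm hUD hYf ha h0 hreg hEY hEm hEpos hN hNa ht M hM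
      (θ / 3) hθ3, hunif.start_small hEY hEm hε0 hθ3, htail.eventually (gt_mem_nhds hθ3),
      hzN (δ / 2) (half_pos hδ)] with k hk hsk htk hzk
    have hδN : 0 ≤ δ / 2 * N k := mul_nonneg (half_pos hδ).le (hNnn k)
    have htN : 0 ≤ t * N k := mul_nonneg ht (hNnn k)
    have := regen_lower hmp hUD (hEm k) (hEpos k) (hEf k) (hw k) (hwD k) (hπ1 k) (hU' k)
      (m := ⌊t * N k⌋₊) (n := ⌊(t + δ) * N k⌋₊)
      (B := ∑ i ∈ Finset.range M,
        (1 - retDF μ T (E k) (N k) (t - stepPt α t M i)) * (t ^ α / M) - θ / 3 - θ / 3)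
      (fun ι : ℕ => δ / 2 < γT (μ (E k)).toReal * ι)
      (Nat.le_floor (by linarith)) ?_ ?_
    · simp only [Function.comp] at htk
      rw [retDF]
      linarith
    · intro ι hι
      rw [hγN, not_lt, one_div_mul_eq_div, div_le_iff₀ (hNpos k)] at hι
      refine Nat.le_floor ?_
      push_cast
      have := Nat.floor_le htN
      linarith
    · intro u hu
      have := (hUD u hu).isProbabilityMeasure
      have h1 := hk u hu
      have h2 := hsk u hu
      have h3 := real_visitAny_le (ν := μ.withDensity u) T (E k) ⌊t * N k⌋₊
      linarith
  obtain ⟨F, hFm, hF01, hFeq, hFlim⟩ := approx_solutions_converge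
    (R := fun k => retDF μ T (E k) (N k)) hα
    (fun k => retDF_monotone μ T (hEpos k) (hEf k) (hNnn k))
    (fun k t => condProb_mem μ (hEpos k) (hEf k) _) hup hlow
  refine ⟨F, memF_of_volterra hα hFm hF01 hFeq, hFeq, fun G hG hGeq => ?_, fun t ht => ⟨?_, ?_⟩⟩
  · exact volterra_unique h0 (hFm.monotoneOn _) (fun t _ => hF01 t)
      (fun s hs t _ hst => hG.1 hs hst) hG.2.1 hFeq hGeq
  · simp only [hnrm]
    exact hFlim t ht
  · have hhit : ∀ k, nrmDF μ T γT Y (E k) t = (μ.withDensity (Y.indicator fun _ => 1)).real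
        (visitPos T (E k) ⌊t * N k⌋₊) := by
      intro k
      rw [hnrm, condProb, hY1, div_one, Measure.real, withDensity_indicator hYm,
        withDensity_const, one_smul, Measure.restrict_apply
          (measurableSet_visitPos hTm (hEm k) _), inter_comm]
    have := (hUD _ h1Y).isProbabilityMeasure
    have hupper := eventually_le_fracInt (L := F) (R := fun k => retDF μ T (E k) (N k))
      (q := fun k => nrmDF μ T γT Y (E k) t) h0 ht hFm hF01
      (fun p hp θ hθ => by
        filter_upwards [(hFlim p hp).eventually (lt_mem_nhds (sub_lt_self (F p) hθ))] with k hk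
        exact hk.le)
      (fun M hM θ hθ => by
        filter_upwards [hunif.hit_upper hTm hUD hYf ha h0 hreg hEY hEm hEpos hε0 hN hNa ht M hM
          θ hθ] with k hk
        rw [hhit]
        exact (measureReal_mono (visitPos_subset_visitAny T (E k) _)).trans (hk _ h1Y))
    have hlower := eventually_fracInt_le (L := F) (R := fun k => retDF μ T (E k) (N k))
      (q := fun k => nrmDF μ T γT Y (E k) t) h0 ht hFm hF01
      (fun p hp θ hθ => by
        filter_upwards [(hFlim p hp).eventually (gt_mem_nhds (lt_add_of_pos_right (F p) hθ))]
          with k hk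
        exact hk.le)
      (fun M hM θ hθ => by
        filter_upwards [hunif.hit_lower hTm hUD hYf ha h0 hreg hEY hEm hEpos hN hNa ht M hM
          (θ / 2) (half_pos hθ), hunif.start_small hEY hEm hε0 (half_pos hθ)] with k hk hsk
        rw [hhit]
        have h1 := hk _ h1Y
        have h2 := hsk _ h1Y
        have h3 := real_visitAny_le (ν := μ.withDensity (Y.indicator fun _ => 1)) T (E k)
          ⌊t * N k⌋₊
        linarith)
    rw [← hFeq t ht] at hupper hlower
    rw [Metric.tendsto_nhds]
    intro θ hθ
    filter_upwards [hupper (θ / 2) (half_pos hθ), hlower (θ / 2) (half_pos hθ)] with k h1 h2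
    rw [Real.dist_eq, abs_lt]
    constructor <;> linarith
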